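/- arXiv:1407.5518 — 3 statements merged into one kernel-verified Lean document; each statement's English description precedes it below -/
import Mathlib

section
/- Let p>1 and fix a positive constant σ > 0. Then the infimum of λ_p(Ω,σ) over all open bounded convex domains Ω ⊂ ℝ^n with C^2 boundary equals C_p = ((p-1)/p)^p. -/
open MeasureTheory Metric Set Filter Bornology
open scoped ENNReal Topology

noncomputable section

namespace RobinHardy

/-- Distance to the boundary of `Ω`. -/
def sdist {n : ℕ} (Ω : Set (EuclideanSpace ℝ (Fin n))) (x : EuclideanSpace ℝ (Fin n)) : ℝ :=
  Metric.infDist x (frontier Ω)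

/-- The in-radius of `Ω`, i.e. `sup_{x ∈ Ω} dist(x, ∂Ω)`. -/
def inradius {n : ℕ} (Ω : Set (EuclideanSpace ℝ (Fin n))) : ℝ :=
  sSup (sdist Ω '' Ω)

/-- The surface measure on `∂Ω`: the `(n-1)`-dimensional Hausdorff measure restricted
to the boundary of `Ω`. -/
def surf {n : ℕ} (Ω : Set (EuclideanSpace ℝ (Fin n))) :
    Measure (EuclideanSpace ℝ (Fin n)) :=
  (Measure.hausdorffMeasure ((n : ℝ) - 1)).restrict (frontier Ω)

/-- `Ω` has boundary of class `C²`: near every boundary point, `Ω` is a sublevel set of a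
`C²` function with non-vanishing differential. -/
def HasC2Boundary {n : ℕ} (Ω : Set (EuclideanSpace ℝ (Fin n))) : Prop :=
  ∀ x ∈ frontier Ω, ∃ (U : Set (EuclideanSpace ℝ (Fin n)))
    (f : EuclideanSpace ℝ (Fin n) → ℝ), IsOpen U ∧ x ∈ U ∧ ContDiff ℝ 2 f ∧
      (∀ y ∈ U, fderiv ℝ f y ≠ 0) ∧ Ω ∩ U = {y ∈ U | f y < 0} ∧
      frontier Ω ∩ U = {y ∈ U | f y = 0}

/-- Membership in `W^{1,p}(Ω)`, realized via functions continuous up to the boundary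
(providing the boundary trace), differentiable in `Ω`, with finite `L^p`-integrals of the
function and of its gradient. -/
def MemW1p {n : ℕ} (p : ℝ) (Ω : Set (EuclideanSpace ℝ (Fin n)))
    (u : EuclideanSpace ℝ (Fin n) → ℝ) : Prop :=
  ContinuousOn u (closure Ω) ∧ (∀ x ∈ Ω, DifferentiableAt ℝ u x) ∧
    (∫⁻ x in Ω, ENNReal.ofReal (|u x| ^ p)) ≠ ∞ ∧
    (∫⁻ x in Ω, ENNReal.ofReal (‖fderiv ℝ u x‖ ^ p)) ≠ ∞

/-- The `p`-th power of the `W^{1,p}(Ω)`-distance between two functions. -/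
def W1pDist {n : ℕ} (p : ℝ) (Ω : Set (EuclideanSpace ℝ (Fin n)))
    (u v : EuclideanSpace ℝ (Fin n) → ℝ) : ℝ≥0∞ :=
  (∫⁻ x in Ω, ENNReal.ofReal (|u x - v x| ^ p)) +
    ∫⁻ x in Ω, ENNReal.ofReal (‖fderiv ℝ u x - fderiv ℝ v x‖ ^ p)

/-- Membership in `W^{1,p}_{0,Γ}(Ω)`: the closure, in the `W^{1,p}(Ω)`-norm, of the set of
`C¹` functions vanishing on `Γ`. -/
def MemW1pGamma {n : ℕ} (p : ℝ) (Ω Γ : Set (EuclideanSpace ℝ (Fin n)))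
    (u : EuclideanSpace ℝ (Fin n) → ℝ) : Prop :=
  MemW1p p Ω u ∧ ∃ v : ℕ → EuclideanSpace ℝ (Fin n) → ℝ,
    (∀ j, ContDiff ℝ 1 (v j)) ∧ (∀ j, ∀ x ∈ Γ, v j x = 0) ∧
      Tendsto (fun j => W1pDist p Ω (v j) u) atTop (𝓝 0)

/-- Membership in `W^{1,p}_0(Ω)`: the closure of `C_c^∞(Ω)` in the `W^{1,p}(Ω)`-norm. -/
def MemW1p0 {n : ℕ} (p : ℝ) (Ω : Set (EuclideanSpace ℝ (Fin n)))
    (u : EuclideanSpace ℝ (Fin n) → ℝ) : Prop :=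
  MemW1p p Ω u ∧ ∃ v : ℕ → EuclideanSpace ℝ (Fin n) → ℝ,
    (∀ j, ContDiff ℝ (⊤ : ℕ∞) (v j) ∧ HasCompactSupport (v j) ∧ tsupport (v j) ⊆ Ω) ∧
      Tendsto (fun j => W1pDist p Ω (v j) u) atTop (𝓝 0)

/-- The class `Σ_Γ` of boundary functions: `σ = +∞` on `Γ` and `σ` essentially bounded
on `∂Ω \ cl(Γ)`. -/
def SigmaGamma {n : ℕ} (Ω Γ : Set (EuclideanSpace ℝ (Fin n)))
    (σ : EuclideanSpace ℝ (Fin n) → ℝ≥0∞) : Prop :=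
  (∀ y ∈ Γ, σ y = ∞) ∧
    essSup σ ((surf Ω).restrict (frontier Ω \ closure Γ)) ≠ ∞

/-- `α(x) = ((p-1)/p)·σ(π(x))^{1/(1-p)}`, where `π` is a nearest-point projection onto `∂Ω`
(with the conventions `α(x) = 0` when `σ(π(x)) = ∞` and `α(x) = ∞` when `σ(π(x)) = 0`,
built into the `ℝ≥0∞`-valued power). -/
def alphaF {n : ℕ} (p : ℝ) (σ : EuclideanSpace ℝ (Fin n) → ℝ≥0∞)
    (π : EuclideanSpace ℝ (Fin n) → EuclideanSpace ℝ (Fin n))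
    (x : EuclideanSpace ℝ (Fin n)) : ℝ≥0∞ :=
  ENNReal.ofReal ((p - 1) / p) * σ (π x) ^ (1 / (1 - p))

/-- The weighted norm `‖u‖_{p,σ}^p = ∫_Ω |u(x)|^p/(δ(x)+α(x))^p dx`. -/
def wnorm {n : ℕ} (p : ℝ) (Ω : Set (EuclideanSpace ℝ (Fin n)))
    (σ : EuclideanSpace ℝ (Fin n) → ℝ≥0∞)
    (π : EuclideanSpace ℝ (Fin n) → EuclideanSpace ℝ (Fin n))
    (u : EuclideanSpace ℝ (Fin n) → ℝ) : ℝ≥0∞ :=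
  ∫⁻ x in Ω, ENNReal.ofReal (|u x| ^ p) /
    (ENNReal.ofReal (sdist Ω x) + alphaF p σ π x) ^ p

/-- The Robin functional `Q_p[σ,u] = ∫_Ω |∇u|^p dx + ∫_{∂Ω} σ|u|^p dν`, the boundary
integral being taken over the set where `σ` is finite. -/
def Qp {n : ℕ} (p : ℝ) (Ω : Set (EuclideanSpace ℝ (Fin n)))
    (σ : EuclideanSpace ℝ (Fin n) → ℝ≥0∞)
    (u : EuclideanSpace ℝ (Fin n) → ℝ) : ℝ≥0∞ :=
  (∫⁻ x in Ω, ENNReal.ofReal (‖fderiv ℝ u x‖ ^ p)) +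
    ∫⁻ y in frontier Ω ∩ {y | σ y ≠ ∞}, σ y * ENNReal.ofReal (|u y| ^ p) ∂(surf Ω)

/-- The variational quantity `λ_p(Ω,σ) = inf { Q_p[σ,u]/‖u‖_{p,σ}^p : u ∈ W^{1,p}_{0,Γ}(Ω), u ≠ 0 }`. -/
def lam {n : ℕ} (p : ℝ) (Ω Γ : Set (EuclideanSpace ℝ (Fin n)))
    (σ : EuclideanSpace ℝ (Fin n) → ℝ≥0∞)
    (π : EuclideanSpace ℝ (Fin n) → EuclideanSpace ℝ (Fin n)) : ℝ≥0∞ :=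
  ⨅ (u : EuclideanSpace ℝ (Fin n) → ℝ) (_ : MemW1pGamma p Ω Γ u)
    (_ : wnorm p Ω σ π u ≠ 0), Qp p Ω σ u / wnorm p Ω σ π u

/-- The variational quantity `λ_p(Ω,σ)` with the infimum over all of `W^{1,p}(Ω)`. -/
def lamAll {n : ℕ} (p : ℝ) (Ω : Set (EuclideanSpace ℝ (Fin n)))
    (σ : EuclideanSpace ℝ (Fin n) → ℝ≥0∞)
    (π : EuclideanSpace ℝ (Fin n) → EuclideanSpace ℝ (Fin n)) : ℝ≥0∞ :=
  ⨅ (u : EuclideanSpace ℝ (Fin n) → ℝ) (_ : MemW1p p Ω u)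
    (_ : wnorm p Ω σ π u ≠ 0), Qp p Ω σ u / wnorm p Ω σ π u

/-- `α = ((p-1)/p)·σ^{1/(1-p)}` for a constant boundary parameter `σ > 0`. -/
def alphaC (p σ : ℝ) : ℝ := ((p - 1) / p) * σ ^ (1 / (1 - p))

/-- `‖u‖_{p,σ}^p` for a constant boundary parameter `σ`. -/
def wnormC {n : ℕ} (p : ℝ) (Ω : Set (EuclideanSpace ℝ (Fin n))) (σ : ℝ)
    (u : EuclideanSpace ℝ (Fin n) → ℝ) : ℝ≥0∞ :=
  ∫⁻ x in Ω, ENNReal.ofReal (|u x| ^ p / (sdist Ω x + alphaC p σ) ^ p)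

/-- `Q_p[σ,u]` for a constant boundary parameter `σ`. -/
def QpC {n : ℕ} (p : ℝ) (Ω : Set (EuclideanSpace ℝ (Fin n))) (σ : ℝ)
    (u : EuclideanSpace ℝ (Fin n) → ℝ) : ℝ≥0∞ :=
  (∫⁻ x in Ω, ENNReal.ofReal (‖fderiv ℝ u x‖ ^ p)) +
    ENNReal.ofReal σ * ∫⁻ y, ENNReal.ofReal (|u y| ^ p) ∂(surf Ω)

/-- `λ_p(Ω,σ)` for a constant boundary parameter `σ`. -/
def lamC {n : ℕ} (p : ℝ) (Ω : Set (EuclideanSpace ℝ (Fin n))) (σ : ℝ) : ℝ≥0∞ :=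
  ⨅ (u : EuclideanSpace ℝ (Fin n) → ℝ) (_ : MemW1p p Ω u)
    (_ : wnormC p Ω σ u ≠ 0), QpC p Ω σ u / wnormC p Ω σ u

/-! ### Geometry of the distance function -/

structure Dom {n : ℕ} (Ω : Set (EuclideanSpace ℝ (Fin n))) : Prop where
  op : IsOpen Ω
  cv : Convex ℝ Ω
  fr : (frontier Ω).Nonempty

lemma dom_of {n : ℕ} (hn : 1 ≤ n) {Ω : Set (EuclideanSpace ℝ (Fin n))} (ho : IsOpen Ω)
    (hne : Ω.Nonempty) (hb : IsBounded Ω) (hc : Convex ℝ Ω) : Dom Ω := by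
  refine ⟨ho, hc, ?_⟩
  have : NeZero n := ⟨by omega⟩
  rw [nonempty_frontier_iff]
  refine ⟨hne, ?_⟩
  rintro rfl
  exact NormedSpace.unbounded_univ ℝ (EuclideanSpace ℝ (Fin n)) hb

lemma sdist_nonneg {n : ℕ} (Ω : Set (EuclideanSpace ℝ (Fin n))) (x) : 0 ≤ sdist Ω x :=
  Metric.infDist_nonneg

lemma sdist_lip {n : ℕ} (Ω : Set (EuclideanSpace ℝ (Fin n))) : LipschitzWith 1 (sdist Ω) :=
  Metric.lipschitz_infDist_pt _

lemma sdist_cont {n : ℕ} (Ω : Set (EuclideanSpace ℝ (Fin n))) : Continuous (sdist Ω) :=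
  (sdist_lip Ω).continuous

lemma sdist_pos {n : ℕ} {Ω : Set (EuclideanSpace ℝ (Fin n))} (h : Dom Ω) {x} (hx : x ∈ Ω) :
    0 < sdist Ω x := by
  unfold sdist
  rw [← isClosed_frontier.notMem_iff_infDist_pos h.fr]
  rw [h.op.frontier_eq]
  exact fun h => h.2 hx

lemma ball_sub {n : ℕ} {Ω : Set (EuclideanSpace ℝ (Fin n))} {x} (hx : x ∈ Ω) :
    ball x (sdist Ω x) ⊆ Ω := by
  by_contra hcon
  rw [not_subset] at hcon
  obtain ⟨z, hz, hzn⟩ := hcon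
  have hpc : IsPreconnected (ball x (sdist Ω x)) := (convex_ball x _).isPreconnected
  have hx' : x ∈ ball x (sdist Ω x) := mem_ball_self (dist_nonneg.trans_lt (mem_ball.1 hz))
  have hdis : ball x (sdist Ω x) ⊆ interior Ω ∪ interior Ωᶜ := by
    rw [← compl_frontier_eq_union_interior]
    intro w hw hwf
    have h1 : sdist Ω x ≤ dist x w := Metric.infDist_le_dist_of_mem hwf
    rw [mem_ball, dist_comm] at hw
    linarith
  have hxi : x ∈ interior Ω :=
    (hdis hx').resolve_right fun h => interior_subset h hx
  have hzi : z ∈ interior Ωᶜ :=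
    (hdis hz).resolve_left fun h => hzn (interior_subset h)
  obtain ⟨w, _, hw1, hw2⟩ := hpc _ _ isOpen_interior isOpen_interior hdis
    ⟨x, hx', hxi⟩ ⟨z, hz, hzi⟩
  exact interior_subset hw2 (interior_subset hw1)

/-- supporting directions dominate the distance -/
lemma le_of_supp {n : ℕ} {Ω : Set (EuclideanSpace ℝ (Fin n))} {m y : EuclideanSpace ℝ (Fin n)}
    (hm : ‖m‖ = 1) (h : ∀ z ∈ Ω, 0 < inner ℝ m (z - y)) {z} (hz : z ∈ Ω) :
    sdist Ω z ≤ inner ℝ m (z - y) := by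
  refine le_of_forall_lt fun s hs => ?_
  by_cases hs0 : 0 ≤ s
  · have : z - s • m ∈ Ω := by
      apply ball_sub hz
      rw [mem_ball, dist_eq_norm]
      simp [norm_smul, hm, abs_of_nonneg hs0, hs]
    have h2 := h _ this
    have : z - s • m - y = (z - y) - s • m := by abel
    rw [this, inner_sub_right, inner_smul_right, real_inner_self_eq_norm_sq, hm] at h2
    linarith
  · have := h z hz
    linarith

lemma exists_supp {n : ℕ} {Ω : Set (EuclideanSpace ℝ (Fin n))} (h : Dom Ω) {x} (hx : x ∈ Ω) :
    ∃ m : EuclideanSpace ℝ (Fin n), ‖m‖ = 1 ∧ x - sdist Ω x • m ∈ frontier Ω ∧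
      ∀ z ∈ Ω, sdist Ω z ≤ sdist Ω x + inner ℝ m (z - x) := by
  obtain ⟨y, hy, hxy⟩ := isClosed_frontier.exists_infDist_eq_dist h.fr x
  change sdist Ω x = _ at hxy
  have hyn : y ∉ Ω := by
    rw [h.op.frontier_eq] at hy
    exact hy.2
  obtain ⟨f, hf⟩ := geometric_hahn_banach_open_point h.cv h.op hyn
  set w := (InnerProductSpace.toDual ℝ (EuclideanSpace ℝ (Fin n))).symm f with hw
  have hfw : ∀ z, f z = inner ℝ w z := fun z => by
    rw [hw, InnerProductSpace.toDual_symm_apply]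
  have hw0 : w ≠ 0 := by
    intro h0
    have := hf x hx
    simp [hfw, h0] at this
  have hwn : 0 < ‖w‖ := norm_pos_iff.2 hw0
  set m := -(‖w‖⁻¹ • w) with hm
  have hm1 : ‖m‖ = 1 := by
    rw [hm, norm_neg, norm_smul, norm_inv, norm_norm, inv_mul_cancel₀ hwn.ne']
  have hpos : ∀ z ∈ Ω, 0 < inner ℝ m (z - y) := by
    intro z hz
    have := hf z hz
    rw [hfw, hfw] at this
    rw [hm, inner_neg_left, real_inner_smul_left, inner_sub_right]
    have : 0 < ‖w‖⁻¹ * (inner ℝ w y - inner ℝ w z) := mul_pos (by positivity) (by linarith)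
    linarith
  have hx1 := le_of_supp hm1 hpos hx
  have heq : x - y = sdist Ω x • m := by
    have hn : ‖x - y‖ = sdist Ω x := by rw [hxy, dist_eq_norm]
    have : ‖x - y - sdist Ω x • m‖ ^ 2 ≤ 0 := by
      rw [@norm_sub_sq_real, hn, inner_smul_right, norm_smul, hm1, real_inner_comm]
      have := sdist_nonneg Ω x
      rw [Real.norm_of_nonneg this]
      nlinarith
    have h2 : ‖x - y - sdist Ω x • m‖ = 0 := by
      have := norm_nonneg (x - y - sdist Ω x • m)
      nlinarith
    rw [norm_eq_zero] at h2
    exact sub_eq_zero.1 h2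
  have hy' : y = x - sdist Ω x • m := by rw [← heq]; abel
  refine ⟨m, hm1, hy' ▸ hy, fun z hz => ?_⟩
  have := le_of_supp hm1 hpos hz
  rw [hy'] at this
  have h3 : z - (x - sdist Ω x • m) = (z - x) + sdist Ω x • m := by abel
  rw [h3, inner_add_right, inner_smul_right, real_inner_self_eq_norm_sq, hm1] at this
  linarith

/-- gradient of the distance -/
def gr {n : ℕ} (Ω : Set (EuclideanSpace ℝ (Fin n))) (x : EuclideanSpace ℝ (Fin n)) :
    EuclideanSpace ℝ (Fin n) :=
  (InnerProductSpace.toDual ℝ (EuclideanSpace ℝ (Fin n))).symm (fderiv ℝ (sdist Ω) x)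

def DD {n : ℕ} (Ω : Set (EuclideanSpace ℝ (Fin n))) : Set (EuclideanSpace ℝ (Fin n)) :=
  Ω ∩ {x | DifferentiableAt ℝ (sdist Ω) x}

lemma gr_meas {n : ℕ} (Ω : Set (EuclideanSpace ℝ (Fin n))) : Measurable (gr Ω) :=
  (LinearIsometryEquiv.continuous _).measurable.comp (measurable_fderiv ℝ _)

lemma DD_meas {n : ℕ} {Ω : Set (EuclideanSpace ℝ (Fin n))} (h : Dom Ω) : MeasurableSet (DD Ω) :=
  h.op.measurableSet.inter (measurableSet_of_differentiableAt ℝ _)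

lemma DD_ae {n : ℕ} (Ω : Set (EuclideanSpace ℝ (Fin n))) :
    (DD Ω : Set _) =ᵐ[volume] Ω := by
  have := (sdist_lip Ω).ae_differentiableAt (μ := volume)
  filter_upwards [this] with x hx
  apply propext
  exact ⟨fun h => h.1, fun h => ⟨h, hx⟩⟩

lemma gr_spec {n : ℕ} {Ω : Set (EuclideanSpace ℝ (Fin n))} (h : Dom Ω) {x} (hx : x ∈ DD Ω) :
    ‖gr Ω x‖ = 1 ∧ x - sdist Ω x • gr Ω x ∈ frontier Ω ∧
      ∀ z ∈ Ω, sdist Ω z ≤ sdist Ω x + inner ℝ (gr Ω x) (z - x) := by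
  obtain ⟨m, hm⟩ := exists_supp h hx.1
  have : gr Ω x = m := by
    have hd : DifferentiableAt ℝ (sdist Ω) x := hx.2
    have hmin : IsLocalMin (fun z => (innerSL ℝ m) (z - x) - sdist Ω z) x := by
      filter_upwards [h.op.mem_nhds hx.1] with z hz
      have := hm.2.2 z hz
      simp only [sub_self, map_zero, innerSL_apply_apply]
      linarith
    have h0 := hmin.fderiv_eq_zero
    have h1 : HasFDerivAt (fun z => (innerSL ℝ m) (z - x) - sdist Ω z)
        (innerSL ℝ m - fderiv ℝ (sdist Ω) x) x := by
      refine HasFDerivAt.sub ?_ hd.hasFDerivAt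
      exact HasFDerivAt.comp (g := innerSL ℝ m) (f := fun z => z - x) x
        (innerSL ℝ m).hasFDerivAt ((hasFDerivAt_id x).sub_const x)
    rw [h1.fderiv, sub_eq_zero] at h0
    unfold gr
    rw [← h0]
    rw [LinearIsometryEquiv.symm_apply_eq]
    ext z
    simp
  rw [this]
  exact hm

lemma step_mem {n : ℕ} {Ω : Set (EuclideanSpace ℝ (Fin n))} (h : Dom Ω) {x} (hx : x ∈ DD Ω)
    {t : ℝ} (ht : 0 ≤ t) (ht' : t < sdist Ω x) :
    x - t • gr Ω x ∈ Ω ∧ sdist Ω (x - t • gr Ω x) = sdist Ω x - t := by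
  obtain ⟨h1, h2, h3⟩ := gr_spec h hx
  refine ⟨?_, le_antisymm ?_ ?_⟩
  · apply ball_sub hx.1
    rw [mem_ball, dist_eq_norm]
    simp [norm_smul, h1, abs_of_nonneg ht, ht']
  · refine (Metric.infDist_le_dist_of_mem h2).trans ?_
    rw [dist_eq_norm]
    have : x - t • gr Ω x - (x - sdist Ω x • gr Ω x) = (sdist Ω x - t) • gr Ω x := by
      rw [sub_smul]; abel
    rw [this, norm_smul, h1, Real.norm_of_nonneg (by linarith), mul_one]
  · have := (sdist_lip Ω).dist_le_mul x (x - t • gr Ω x)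
    rw [Real.dist_eq, dist_eq_norm] at this
    simp [norm_smul, h1, abs_of_nonneg ht] at this
    have := (abs_le.1 this).2
    linarith

lemma contr {n : ℕ} {Ω : Set (EuclideanSpace ℝ (Fin n))} (h : Dom Ω) {x x'} (hx : x ∈ DD Ω)
    (hx' : x' ∈ DD Ω) {t : ℝ} (ht : 0 ≤ t) :
    dist x x' ≤ dist (x - t • gr Ω x) (x' - t • gr Ω x') := by
  have h1 := (gr_spec h hx).2.2 x' hx'.1
  have h2 := (gr_spec h hx').2.2 x hx.1
  rw [dist_eq_norm, dist_eq_norm]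
  apply le_of_sq_le_sq _ (norm_nonneg _)
  have : x - t • gr Ω x - (x' - t • gr Ω x') = (x - x') - t • (gr Ω x - gr Ω x') := by
    rw [smul_sub]; abel
  rw [this, @norm_sub_sq_real _ _ _ (x - x'), inner_smul_right, inner_sub_right]
  rw [← neg_sub x x', inner_neg_right, real_inner_comm] at h1
  rw [real_inner_comm] at h2
  have : 0 ≤ t * -(inner ℝ (x - x') (gr Ω x) - inner ℝ (x - x') (gr Ω x')) :=
    mul_nonneg ht (by linarith)
  nlinarith [sq_nonneg ‖t • (gr Ω x - gr Ω x')‖]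

lemma contr2 {n : ℕ} {Ω : Set (EuclideanSpace ℝ (Fin n))} (h : Dom Ω) {x x'} (hx : x ∈ DD Ω)
    (hx' : x' ∈ DD Ω) {t : ℝ} (ht : 0 < t) (hxt : t < sdist Ω x) (hxt' : t < sdist Ω x') :
    ‖(x - (sdist Ω x - t) • gr Ω x) - (x' - (sdist Ω x' - t) • gr Ω x')‖ ≤
        dist (x - sdist Ω x • gr Ω x) (x' - sdist Ω x' • gr Ω x') ∧
    ‖gr Ω x - gr Ω x'‖ ≤
        dist (x - sdist Ω x • gr Ω x) (x' - sdist Ω x' • gr Ω x') / t := by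
  obtain ⟨a1, a2⟩ := step_mem h hx (t := sdist Ω x - t) (by linarith) (by linarith)
  obtain ⟨b1, b2⟩ := step_mem h hx' (t := sdist Ω x' - t) (by linarith) (by linarith)
  obtain ⟨g1, _, g3⟩ := gr_spec h hx
  obtain ⟨k1, _, k3⟩ := gr_spec h hx'
  have h1 := g3 _ b1
  have h2 := k3 _ a1
  set w := x - (sdist Ω x - t) • gr Ω x with hw
  set w' := x' - (sdist Ω x' - t) • gr Ω x' with hw'
  have e1 : w' - x = -(w - w') - (sdist Ω x - t) • gr Ω x := by rw [hw]; abel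
  have e2 : w - x' = (w - w') - (sdist Ω x' - t) • gr Ω x' := by rw [hw']; abel
  rw [b2, e1, inner_sub_right, inner_smul_right, real_inner_self_eq_norm_sq, g1,
    inner_neg_right, real_inner_comm] at h1
  rw [a2, e2, inner_sub_right, inner_smul_right, real_inner_self_eq_norm_sq, k1,
    real_inner_comm] at h2
  have e3 : (x - sdist Ω x • gr Ω x) - (x' - sdist Ω x' • gr Ω x') =
      (w - w') - t • (gr Ω x - gr Ω x') := by
    rw [hw, hw', smul_sub, sub_smul, sub_smul]; abel
  rw [dist_eq_norm, e3]
  have key : ‖w - w'‖ ^ 2 + (t * ‖gr Ω x - gr Ω x'‖) ^ 2 ≤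
      ‖(w - w') - t • (gr Ω x - gr Ω x')‖ ^ 2 := by
    rw [@norm_sub_sq_real _ _ _ (w - w'), inner_smul_right, inner_sub_right, norm_smul,
      Real.norm_of_nonneg ht.le]
    have : 0 ≤ t * -(inner ℝ (w - w') (gr Ω x) - inner ℝ (w - w') (gr Ω x')) :=
      mul_nonneg ht.le (by linarith)
    nlinarith
  constructor
  · apply le_of_sq_le_sq _ (norm_nonneg _)
    nlinarith [sq_nonneg (t * ‖gr Ω x - gr Ω x'‖)]
  · rw [le_div_iff₀ ht, mul_comm]
    apply le_of_sq_le_sq _ (norm_nonneg _)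
    nlinarith [sq_nonneg ‖w - w'‖]


lemma vol_le_image {n : ℕ} {A : Set (EuclideanSpace ℝ (Fin n))}
    {Φ : EuclideanSpace ℝ (Fin n) → EuclideanSpace ℝ (Fin n)}
    (h : ∀ x ∈ A, ∀ x' ∈ A, dist x x' ≤ dist (Φ x) (Φ x')) : volume A ≤ volume (Φ '' A) := by
  have hinj : InjOn Φ A := by
    intro x hx x' hx' hh
    have := h x hx x' hx'
    rw [hh, dist_self] at this
    exact dist_le_zero.1 this
  rcases A.eq_empty_or_nonempty with rfl | ⟨a, ha⟩
  · simp
  have : Nonempty (EuclideanSpace ℝ (Fin n)) := ⟨a⟩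
  have hl : LipschitzOnWith 1 (Function.invFunOn Φ A) (Φ '' A) := by
    rw [lipschitzOnWith_iff_dist_le_mul]
    rintro _ ⟨x, hx, rfl⟩ _ ⟨x', hx', rfl⟩
    rw [hinj.leftInvOn_invFunOn hx, hinj.leftInvOn_invFunOn hx']
    simpa using h x hx x' hx'
  have him : Function.invFunOn Φ A '' (Φ '' A) = A := hinj.invFunOn_image subset_rfl
  have h1 := hl.hausdorffMeasure_image_le (d := (Module.finrank ℝ (EuclideanSpace ℝ (Fin n)) : ℝ))
    (by positivity)
  rw [him] at h1
  simp only [ENNReal.coe_one, ENNReal.one_rpow, one_mul] at h1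
  rw [Measure.isAddLeftInvariant_eq_smul (volume : Measure (EuclideanSpace ℝ (Fin n)))
    (Measure.hausdorffMeasure (Module.finrank ℝ (EuclideanSpace ℝ (Fin n)) : ℝ))]
  simp only [Measure.smul_apply]
  gcongr

lemma box {n : ℕ} (hn : 1 ≤ n) {A : Set (EuclideanSpace ℝ (Fin n))} {e : EuclideanSpace ℝ (Fin n)}
    (he : ‖e‖ = 1) {a b : ℝ} 
    (hb : ∀ x ∈ A, ∀ x' ∈ A, |inner ℝ e (x - x')| ≤ b)
    (ha : ∀ f : EuclideanSpace ℝ (Fin n), ‖f‖ = 1 → inner ℝ e f = 0 →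
      ∀ x ∈ A, ∀ x' ∈ A, |inner ℝ f (x - x')| ≤ a) :
    volume A ≤ ENNReal.ofReal b * ENNReal.ofReal a ^ (n - 1) := by
  obtain ⟨m, rfl⟩ : ∃ m, n = m + 1 := ⟨n - 1, by omega⟩
  have hv : Orthonormal ℝ (({0} : Set (Fin (m+1))).domRestrict (fun _ : Fin (m + 1) => e)) := by
    constructor
    · intro i; simpa using he
    · intro i j hij
      exact absurd (Subsingleton.elim i j) hij
  obtain ⟨B, hB⟩ := hv.exists_orthonormalBasis_extension_of_card_eq (by simp)
  have hB0 : B 0 = e := hB 0 rfl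
  have h1 : volume A = volume (B.repr '' A) := by
    have hm := B.measurePreserving_repr
    have := hm.measure_preimage_equiv (f := B.measurableEquiv) (B.repr '' A)
    rw [← this]
    congr 1
    exact (preimage_image_eq _ B.repr.injective).symm
  have h2 : volume (B.repr '' A) =
      volume ((MeasurableEquiv.toLp 2 (Fin (m+1) → ℝ)).symm '' (B.repr '' A)) := by
    have hm := EuclideanSpace.volume_preserving_symm_measurableEquiv_toLp (Fin (m+1))
    have := hm.measure_preimage_equiv ((MeasurableEquiv.toLp 2 (Fin (m+1) → ℝ)).symm '' (B.repr '' A))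
    rw [← this]
    congr 1
    exact (preimage_image_eq _ (MeasurableEquiv.injective _)).symm
  rw [h1, h2]
  refine (Real.volume_pi_le_prod_diam _).trans ?_
  rw [Fin.prod_univ_succ]
  have key : ∀ (i : Fin (m+1)) (c : ℝ), (∀ x ∈ A, ∀ x' ∈ A, |inner ℝ (B i) (x - x')| ≤ c) →
      ediam (Function.eval i '' ((MeasurableEquiv.toLp 2 (Fin (m+1) → ℝ)).symm '' (B.repr '' A)))
        ≤ ENNReal.ofReal c := by
    intro i c hc
    apply ediam_le
    rintro _ ⟨_, ⟨_, ⟨x, hx, rfl⟩, rfl⟩, rfl⟩ _ ⟨_, ⟨_, ⟨x', hx', rfl⟩, rfl⟩, rfl⟩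
    rw [edist_dist]
    apply ENNReal.ofReal_le_ofReal
    have := hc x hx x' hx'
    rw [inner_sub_right, ← B.repr_apply_apply, ← B.repr_apply_apply] at this
    exact this
  have h0 := key 0 b (by rw [hB0]; exact hb)
  have hs : ∀ i : Fin m, _ := fun i => key i.succ a (ha _ (B.orthonormal.1 _) (by
    rw [← hB0]; exact B.orthonormal.2 (Fin.succ_ne_zero i).symm))
  refine mul_le_mul' h0 ?_
  refine (Finset.prod_le_prod' fun i _ => hs i).trans ?_
  simp


/-- the nearest boundary point -/
def yp {n : ℕ} (Ω : Set (EuclideanSpace ℝ (Fin n))) (x : EuclideanSpace ℝ (Fin n)) :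
    EuclideanSpace ℝ (Fin n) := x - sdist Ω x • gr Ω x

lemma yp_meas {n : ℕ} (Ω : Set (EuclideanSpace ℝ (Fin n))) : Measurable (yp Ω) :=
  measurable_id.sub ((sdist_cont Ω).measurable.smul (gr_meas Ω))

def slab {n : ℕ} (Ω B : Set (EuclideanSpace ℝ (Fin n))) (t ε : ℝ) :
    Set (EuclideanSpace ℝ (Fin n)) :=
  {x ∈ DD Ω | t < sdist Ω x ∧ sdist Ω x ≤ t + ε ∧ yp Ω x ∈ B}

lemma slab_piece {n : ℕ} (hn : 1 ≤ n) {Ω : Set (EuclideanSpace ℝ (Fin n))} (h : Dom Ω)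
    {U : Set (EuclideanSpace ℝ (Fin n))} {t ε d : ℝ} (ht : 0 < t) (hε : 0 ≤ ε)
    (hd : ∀ y ∈ U, ∀ y' ∈ U, dist y y' ≤ d) :
    volume (slab Ω U t ε) ≤
      ENNReal.ofReal (ε + d * (1 + 2 * ε / t)) * ENNReal.ofReal (d * (1 + 2 * ε / t)) ^ (n - 1) := by
  rcases (slab Ω U t ε).eq_empty_or_nonempty with he | ⟨x0, hx0⟩
  · rw [he]; simp
  have g0 := (gr_spec h hx0.1).1
  have dec : ∀ x ∈ slab Ω U t ε, ∀ x' ∈ slab Ω U t ε,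
      ∃ w : EuclideanSpace ℝ (Fin n), ‖w‖ ≤ d ∧ x - x' = w + (sdist Ω x - t) • gr Ω x
        - (sdist Ω x' - t) • gr Ω x' := by
    intro x hx x' hx'
    obtain ⟨c1, c2⟩ := contr2 h hx.1 hx'.1 ht hx.2.1 hx'.2.1
    exact ⟨_, c1.trans (hd _ hx.2.2.2 _ hx'.2.2.2), by abel⟩
  have gd : ∀ x ∈ slab Ω U t ε, ‖gr Ω x - gr Ω x0‖ ≤ d / t := by
    intro x hx
    obtain ⟨c1, c2⟩ := contr2 h hx.1 hx0.1 ht hx.2.1 hx0.2.1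
    refine c2.trans ?_
    gcongr
    exact hd _ hx.2.2.2 _ hx0.2.2.2
  -- inner product with unit vectors
  have ip : ∀ f : EuclideanSpace ℝ (Fin n), ‖f‖ = 1 → ∀ x ∈ slab Ω U t ε,
      |(sdist Ω x - t) * inner ℝ f (gr Ω x - gr Ω x0)| ≤ ε * (d / t) := by
    intro f hf x hx
    rw [abs_mul, abs_of_pos (by linarith [hx.2.1])]
    have h1 := abs_real_inner_le_norm f (gr Ω x - gr Ω x0)
    rw [hf, one_mul] at h1
    have h2 := h1.trans (gd x hx)
    have h3 : sdist Ω x - t ≤ ε := by linarith [hx.2.2.1]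
    exact mul_le_mul h3 h2 (abs_nonneg _) hε
  have hdt : d * (1 + 2 * ε / t) = d + 2 * (ε * (d / t)) := by field_simp
  refine box hn g0 ?_ ?_
  · intro x hx x' hx'
    obtain ⟨w, hw, hxx⟩ := dec x hx x' hx'
    have i1 := ip _ g0 x hx
    have i2 := ip _ g0 x' hx'
    rw [inner_sub_right, real_inner_self_eq_norm_sq, g0] at i1 i2
    have i3 := abs_real_inner_le_norm (gr Ω x0) w
    rw [g0, one_mul] at i3
    rw [hxx, inner_sub_right, inner_add_right, inner_smul_right, inner_smul_right, hdt]
    rw [abs_le] at *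
    have a1 := hx.2.1
    have a2 := hx.2.2.1
    have a3 := hx'.2.1
    have a4 := hx'.2.2.1
    constructor <;> linarith
  · intro f hf hf0 x hx x' hx'
    obtain ⟨w, hw, hxx⟩ := dec x hx x' hx'
    have i1 := ip _ hf x hx
    have i2 := ip _ hf x' hx'
    rw [inner_sub_right, real_inner_comm (gr Ω x0) f, hf0, sub_zero] at i1 i2
    have i3 := abs_real_inner_le_norm f w
    rw [hf, one_mul] at i3
    rw [hxx, inner_sub_right, inner_add_right, inner_smul_right, inner_smul_right, hdt]
    rw [abs_le] at *
    constructor <;> linarith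

lemma slab_piece' {n : ℕ} (hn : 1 ≤ n) {Ω : Set (EuclideanSpace ℝ (Fin n))} (h : Dom Ω)
    {U : Set (EuclideanSpace ℝ (Fin n))} {t ε r : ℝ} (ht : 0 < t) (hε : 0 ≤ ε) (hr : 0 ≤ r)
    (hd : ediam U ≤ ENNReal.ofReal r) :
    volume (slab Ω U t ε) ≤
      ENNReal.ofReal (ε + r * (1 + 2 * ε / t)) * ENNReal.ofReal (1 + 2 * ε / t) ^ (n - 1) *
        ⨆ _ : U.Nonempty, ediam U ^ ((n : ℝ) - 1) := by
  rcases U.eq_empty_or_nonempty with rfl | hU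
  · simp [slab]
  rw [iSup_pos hU]
  have hfin : ediam U ≠ ∞ := ne_top_of_le_ne_top ENNReal.ofReal_ne_top hd
  set d := (ediam U).toReal with hdd
  have hd0 : 0 ≤ d := ENNReal.toReal_nonneg
  have hdr : d ≤ r := ENNReal.toReal_le_of_le_ofReal hr hd
  have hed : ediam U = ENNReal.ofReal d := (ENNReal.ofReal_toReal hfin).symm
  have := slab_piece hn h (U := U) (d := d) ht hε (fun y hy y' hy' => by
    have := edist_le_ediam_of_mem hy hy'
    rw [hed, edist_dist] at this
    exact (ENNReal.ofReal_le_ofReal_iff hd0).1 this)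
  refine this.trans ?_
  have hc : (n : ℝ) - 1 = ((n - 1 : ℕ) : ℝ) := by push_cast [hn]; ring
  rw [hed, hc, ENNReal.rpow_natCast, ENNReal.ofReal_mul hd0, mul_pow, mul_assoc,
    mul_comm (ENNReal.ofReal d ^ (n - 1))]
  gcongr

lemma slab_vol {n : ℕ} (hn : 1 ≤ n) {Ω : Set (EuclideanSpace ℝ (Fin n))} (h : Dom Ω)
    {B : Set (EuclideanSpace ℝ (Fin n))} {t ε : ℝ} (ht : 0 < t) (hε : 0 < ε)  :
    volume (slab Ω B t ε) ≤
      ENNReal.ofReal ε * ENNReal.ofReal (1 + 2 * ε / t) ^ (n - 1) *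
        Measure.hausdorffMeasure ((n : ℝ) - 1) B := by
  have step : ∀ r : ℝ, 0 < r → volume (slab Ω B t ε) ≤
      ENNReal.ofReal (ε + r * (1 + 2 * ε / t)) * ENNReal.ofReal (1 + 2 * ε / t) ^ (n - 1) *
        Measure.hausdorffMeasure ((n : ℝ) - 1) B := by
    intro r hr
    set K := ENNReal.ofReal (ε + r * (1 + 2 * ε / t)) * ENNReal.ofReal (1 + 2 * ε / t) ^ (n - 1)
      with hK
    have hK0 : K ≠ 0 := by
      rw [hK]
      have : 0 < ENNReal.ofReal (ε + r * (1 + 2 * ε / t)) := ENNReal.ofReal_pos.2 (by positivity)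
      have : 0 < ENNReal.ofReal (1 + 2 * ε / t) := ENNReal.ofReal_pos.2 (by positivity)
      positivity
    have hKt : K ≠ ∞ := by
      rw [hK]
      exact ENNReal.mul_ne_top ENNReal.ofReal_ne_top (ENNReal.pow_ne_top ENNReal.ofReal_ne_top)
    rw [mul_comm, ← ENNReal.div_le_iff hK0 hKt, Measure.hausdorffMeasure_apply]
    refine le_iSup₂_of_le (ENNReal.ofReal r) (ENNReal.ofReal_pos.2 hr) ?_
    refine le_iInf fun T => le_iInf fun hT => le_iInf fun hTd => ?_
    rw [ENNReal.div_le_iff hK0 hKt, mul_comm, ← ENNReal.tsum_mul_left]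
    have hsub : slab Ω B t ε ⊆ ⋃ k, slab Ω (T k) t ε := by
      intro x hx
      obtain ⟨k, hk⟩ := mem_iUnion.1 (hT hx.2.2.2)
      exact mem_iUnion.2 ⟨k, hx.1, hx.2.1, hx.2.2.1, hk⟩
    refine (measure_mono hsub).trans ((measure_iUnion_le _).trans ?_)
    exact ENNReal.tsum_le_tsum fun k => slab_piece' hn h ht hε.le hr.le (hTd k)
  by_cases htop : Measure.hausdorffMeasure ((n : ℝ) - 1) B = ∞
  · rw [htop, ENNReal.mul_top]
    · exact le_top
    · have : 0 < ENNReal.ofReal ε := ENNReal.ofReal_pos.2 (by positivity)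
      have : 0 < ENNReal.ofReal (1 + 2 * ε / t) := ENNReal.ofReal_pos.2 (by positivity)
      positivity
  have lim : Tendsto (fun r : ℝ => ENNReal.ofReal (ε + r * (1 + 2 * ε / t)) *
      ENNReal.ofReal (1 + 2 * ε / t) ^ (n - 1) *
        Measure.hausdorffMeasure ((n : ℝ) - 1) B) (𝓝[>] 0) (𝓝 (ENNReal.ofReal ε *
      ENNReal.ofReal (1 + 2 * ε / t) ^ (n - 1) *
        Measure.hausdorffMeasure ((n : ℝ) - 1) B)) := by
    apply ENNReal.Tendsto.mul_const _ (Or.inr htop)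
    apply ENNReal.Tendsto.mul_const _ (Or.inr (ENNReal.pow_ne_top ENNReal.ofReal_ne_top))
    apply ENNReal.tendsto_ofReal
    have : Continuous fun r : ℝ => ε + r * (1 + 2 * ε / t) := by fun_prop
    have := this.tendsto 0
    simp only [zero_mul, add_zero] at this
    exact this.mono_left nhdsWithin_le_nhds
  exact ge_of_tendsto lim (by filter_upwards [self_mem_nhdsWithin] with r hr using step r hr)

/-- volume of a tube over `B`. -/
lemma tube_vol {n : ℕ} (hn : 1 ≤ n) {Ω : Set (EuclideanSpace ℝ (Fin n))} (h : Dom Ω)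
    (B : Set (EuclideanSpace ℝ (Fin n))) {T : ℝ} (hT : 0 < T) :
    volume {x ∈ DD Ω | sdist Ω x ≤ T ∧ yp Ω x ∈ B} ≤
      ENNReal.ofReal T * Measure.hausdorffMeasure ((n : ℝ) - 1) B := by
  have step : ∀ q : ℝ, 0 < q → q < 1 → volume {x ∈ DD Ω | sdist Ω x ≤ T ∧ yp Ω x ∈ B} ≤
      ENNReal.ofReal (T * (1 + 2 * (1 - q) / q) ^ (n - 1)) *
        Measure.hausdorffMeasure ((n : ℝ) - 1) B := by
    intro q hq hq1
    have hsub : {x ∈ DD Ω | sdist Ω x ≤ T ∧ yp Ω x ∈ B} ⊆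
        ⋃ k : ℕ, slab Ω B (T * q ^ (k + 1)) (T * q ^ k * (1 - q)) := by
      rintro x ⟨hx, hxT, hxB⟩
      have hpos := sdist_pos h hx.1
      obtain ⟨k, hk1, hk2⟩ := exists_nat_pow_near_of_lt_one (x := sdist Ω x / T) (y := q)
        (by positivity) ((div_le_one hT).2 hxT) hq hq1
      rw [lt_div_iff₀ hT] at hk1
      rw [div_le_iff₀ hT] at hk2
      refine mem_iUnion.2 ⟨k, hx, by linarith, ?_, hxB⟩
      calc sdist Ω x ≤ q ^ k * T := hk2
        _ = _ := by ring
    refine (measure_mono hsub).trans ((measure_iUnion_le _).trans ?_)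
    have h1 : ∀ k : ℕ, volume (slab Ω B (T * q ^ (k + 1)) (T * q ^ k * (1 - q))) ≤
        ENNReal.ofReal ((T * (1 + 2 * (1 - q) / q) ^ (n - 1) * (1 - q)) * q ^ k) *
        Measure.hausdorffMeasure ((n : ℝ) - 1) B := by
      intro k
      have hq1' : 0 < 1 - q := by linarith
      refine (slab_vol hn h (by positivity) (by positivity)).trans (le_of_eq ?_)
      rw [← ENNReal.ofReal_pow (by positivity), ← ENNReal.ofReal_mul (by positivity)]
      congr 2
      have : 2 * (T * q ^ k * (1 - q)) / (T * q ^ (k + 1)) = 2 * (1 - q) / q := by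
        rw [pow_succ]; field_simp
      rw [this]; ring
    refine (ENNReal.tsum_le_tsum h1).trans ?_
    have hq1' : 0 < 1 - q := by linarith
    rw [ENNReal.tsum_mul_right, ← ENNReal.ofReal_tsum_of_nonneg (fun k => by positivity)
      ((summable_geometric_of_lt_one hq.le hq1).mul_left _), tsum_mul_left,
      tsum_geometric_of_lt_one hq.le hq1, mul_assoc (T * _), mul_inv_cancel₀ hq1'.ne', mul_one]
  by_cases htop : Measure.hausdorffMeasure ((n : ℝ) - 1) B = ∞
  · rw [htop, ENNReal.mul_top]
    · exact le_top
    · exact (ENNReal.ofReal_pos.2 hT).ne'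
  have lim : Tendsto (fun q : ℝ => ENNReal.ofReal (T * (1 + 2 * (1 - q) / q) ^ (n - 1)) *
        Measure.hausdorffMeasure ((n : ℝ) - 1) B) (𝓝[<] 1) (𝓝 (ENNReal.ofReal T *
        Measure.hausdorffMeasure ((n : ℝ) - 1) B)) := by
    apply ENNReal.Tendsto.mul_const _ (Or.inr htop)
    apply ENNReal.tendsto_ofReal
    have : ContinuousAt (fun q : ℝ => T * (1 + 2 * (1 - q) / q) ^ (n - 1)) 1 := by
      fun_prop (disch := norm_num)
    have := this.tendsto
    simp only [sub_self, mul_zero, zero_div, add_zero, one_pow, mul_one] at this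
    exact this.mono_left nhdsWithin_le_nhds
  refine ge_of_tendsto lim ?_
  filter_upwards [self_mem_nhdsWithin, mem_nhdsWithin_of_mem_nhds (lt_mem_nhds zero_lt_one)]
    with q hq hq0 using step q hq0 hq


lemma int_g {p a : ℝ} (hp : 1 < p) (ha : 0 < a) :
    ∫⁻ τ in Ioi (0 : ℝ), ENNReal.ofReal ((p - 1) * (a + τ) ^ (-p)) = ENNReal.ofReal (a ^ (1 - p)) := by
  have hd : ∀ τ ∈ Ici (0 : ℝ), HasDerivAt (fun τ => -(a + τ) ^ (1 - p))
      ((p - 1) * (a + τ) ^ (-p)) τ := by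
    intro τ hτ
    have hpos : 0 < a + τ := by have : 0 ≤ τ := hτ; linarith
    have h1 : HasDerivAt (fun τ : ℝ => a + τ) 1 τ := (hasDerivAt_id τ).const_add a
    have h2 : HasDerivAt (fun τ => -(a + τ) ^ (1 - p)) _ τ :=
      (h1.rpow_const (p := 1 - p) (Or.inl hpos.ne')).neg
    refine h2.congr_deriv ?_
    have : 1 - p - 1 = -p := by ring
    rw [this]; ring
  have hnn : ∀ τ ∈ Ioi (0 : ℝ), 0 ≤ (p - 1) * (a + τ) ^ (-p) := by
    intro τ hτ
    have : 0 < τ := hτ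
    have : 0 < p - 1 := by linarith
    positivity
  have hl : Tendsto (fun τ => -(a + τ) ^ (1 - p)) atTop (𝓝 (0 : ℝ)) := by
    rw [← neg_zero]
    apply Tendsto.neg
    have h1 : Tendsto (fun τ : ℝ => a + τ) atTop atTop := tendsto_atTop_add_const_left _ _ tendsto_id
    have := (tendsto_rpow_neg_atTop (y := p - 1) (by linarith)).comp h1
    simpa [Function.comp_def] using this
  have hi := integrableOn_Ioi_deriv_of_nonneg' hd hnn hl
  have hv := integral_Ioi_of_hasDerivAt_of_nonneg' hd hnn hl
  rw [← ofReal_integral_eq_lintegral_ofReal hi, hv]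
  · simp
  · exact (ae_restrict_iff' measurableSet_Ioi).2 (Eventually.of_forall hnn)

lemma bdry_set {n : ℕ} (hn : 1 ≤ n) {Ω : Set (EuclideanSpace ℝ (Fin n))} (h : Dom Ω)
    {B : Set (EuclideanSpace ℝ (Fin n))} (hB : MeasurableSet B) {p a : ℝ} (hp : 1 < p) (ha : 0 < a) :
    ∫⁻ x in DD Ω ∩ yp Ω ⁻¹' B, ENNReal.ofReal ((p - 1) * (a + sdist Ω x) ^ (-p)) ≤
      ENNReal.ofReal (a ^ (1 - p)) * Measure.hausdorffMeasure ((n : ℝ) - 1) B := by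
  have hp1 : 0 < p - 1 := by linarith
  have hms : MeasurableSet (DD Ω ∩ yp Ω ⁻¹' B) := (DD_meas h).inter (yp_meas Ω hB)
  have hgm : Measurable fun t : ℝ => (p - 1) * (a + t) ^ (-p) := by fun_prop
  rw [← int_g hp ha]
  rw [lintegral_eq_lintegral_meas_lt (volume.restrict (DD Ω ∩ yp Ω ⁻¹' B)),
    lintegral_eq_lintegral_meas_lt (volume.restrict (Ioi (0:ℝ)))]
  rotate_left
  · exact (ae_restrict_iff' measurableSet_Ioi).2 (Eventually.of_forall fun t ht => by
      have : (0:ℝ) < t := ht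
      simp only [Pi.zero_apply]
      positivity)
  · exact hgm.aemeasurable
  · exact Eventually.of_forall fun t => by
      have := sdist_nonneg Ω t
      simp only [Pi.zero_apply]
      positivity
  · exact (hgm.comp (sdist_cont Ω).measurable).aemeasurable
  have hmeas : Measurable fun t => (volume.restrict (Ioi (0:ℝ)))
      {b | t < (p - 1) * (a + b) ^ (-p)} :=
    Antitone.measurable fun s t hst => measure_mono fun x hx => lt_of_le_of_lt hst hx
  rw [← lintegral_mul_const _ hmeas]
  refine lintegral_mono_ae ((ae_restrict_iff' measurableSet_Ioi).2 (Eventually.of_forall ?_))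
  intro r hr
  have hr : 0 < r := hr
  set T := (r / (p - 1)) ^ (-p)⁻¹ - a with hT
  have hiff : ∀ t, 0 ≤ t → (r < (p - 1) * (a + t) ^ (-p) ↔ t < T) := by
    intro t ht
    rw [← div_lt_iff₀' hp1, ← Real.lt_rpow_inv_iff_of_neg (by linarith) (by positivity)
      (by linarith), hT]
    constructor <;> intro <;> linarith
  have hgm2 : Measurable fun x => (p - 1) * (a + sdist Ω x) ^ (-p) :=
    hgm.comp (sdist_cont Ω).measurable
  rw [Measure.restrict_apply (measurableSet_lt measurable_const hgm2),
    Measure.restrict_apply (measurableSet_lt measurable_const hgm)]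
  have e2 : {t : ℝ | r < (p - 1) * (a + t) ^ (-p)} ∩ Ioi 0 = Ioo 0 T := by
    ext t
    simp only [mem_inter_iff, mem_setOf_eq, mem_Ioi, mem_Ioo]
    constructor
    · rintro ⟨h1, h2⟩
      exact ⟨h2, (hiff t h2.le).1 h1⟩
    · rintro ⟨h1, h2⟩
      exact ⟨(hiff t h1.le).2 h2, h1⟩
  rw [e2, Real.volume_Ioo, sub_zero]
  by_cases hT0 : 0 < T
  · refine le_trans (measure_mono ?_) (tube_vol hn h B hT0)
    rintro x ⟨hx1, hx2, hx3⟩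
    exact ⟨hx2, ((hiff _ (sdist_nonneg Ω x)).1 hx1).le, hx3⟩
  · have : {x | r < (p - 1) * (a + sdist Ω x) ^ (-p)} ∩ (DD Ω ∩ yp Ω ⁻¹' B) = ∅ := by
      ext x
      simp only [mem_inter_iff, mem_setOf_eq, mem_empty_iff_false, iff_false]
      rintro ⟨hx1, -⟩
      have := (hiff _ (sdist_nonneg Ω x)).1 hx1
      have := sdist_nonneg Ω x
      linarith
    rw [this]; simp

lemma bdry_int {n : ℕ} (hn : 1 ≤ n) {Ω : Set (EuclideanSpace ℝ (Fin n))} (h : Dom Ω)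
    {p a : ℝ} (hp : 1 < p) (ha : 0 < a) {F : EuclideanSpace ℝ (Fin n) → ℝ≥0∞} (hF : Measurable F) :
    ∫⁻ x in DD Ω, ENNReal.ofReal ((p - 1) * (a + sdist Ω x) ^ (-p)) * F (yp Ω x) ≤
      ENNReal.ofReal (a ^ (1 - p)) * ∫⁻ y, F y ∂(surf Ω) := by
  have hgm : Measurable fun x => ENNReal.ofReal ((p - 1) * (a + sdist Ω x) ^ (-p)) := by
    have := (sdist_cont Ω).measurable
    fun_prop
  have hle : Measure.map (yp Ω) ((volume.restrict (DD Ω)).withDensity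
      fun x => ENNReal.ofReal ((p - 1) * (a + sdist Ω x) ^ (-p))) ≤
      ENNReal.ofReal (a ^ (1 - p)) • surf Ω := by
    rw [Measure.le_iff]
    intro B hB
    rw [Measure.map_apply (yp_meas Ω) hB, withDensity_apply _ (yp_meas Ω hB),
      Measure.restrict_restrict (yp_meas Ω hB), Measure.smul_apply, surf,
      Measure.restrict_apply hB, smul_eq_mul]
    have : yp Ω ⁻¹' B ∩ DD Ω = DD Ω ∩ yp Ω ⁻¹' (B ∩ frontier Ω) := by
      ext x
      constructor
      · rintro ⟨h1, h2⟩
        exact ⟨h2, h1, (gr_spec h h2).2.1⟩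
      · rintro ⟨h1, h2, h3⟩
        exact ⟨h2, h1⟩
    rw [this]
    exact bdry_set hn h (hB.inter isClosed_frontier.measurableSet) hp ha
  have := lintegral_mono' hle (le_refl F)
  rw [lintegral_map hF (yp_meas Ω), lintegral_smul_measure] at this
  have h2 := lintegral_withDensity_eq_lintegral_mul (volume.restrict (DD Ω)) hgm
    (hF.comp (yp_meas Ω))
  exact h2.symm.le.trans this

lemma push {n : ℕ} {Ω : Set (EuclideanSpace ℝ (Fin n))} (h : Dom Ω) {τ : ℝ} (hτ : 0 ≤ τ)
    {F : EuclideanSpace ℝ (Fin n) → ℝ≥0∞} (hF : Measurable F) :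
    ∫⁻ x in DD Ω ∩ {x | τ < sdist Ω x}, F (x - τ • gr Ω x) ≤ ∫⁻ x in Ω, F x := by
  have hm : Measurable fun x => x - τ • gr Ω x := measurable_id.sub ((gr_meas Ω).const_smul τ)
  have hle : Measure.map (fun x => x - τ • gr Ω x)
      (volume.restrict (DD Ω ∩ {x | τ < sdist Ω x})) ≤ volume.restrict Ω := by
    rw [Measure.le_iff]
    intro B hB
    rw [Measure.map_apply hm hB, Measure.restrict_apply (hm hB), Measure.restrict_apply hB]
    refine (vol_le_image (Φ := fun x => x - τ • gr Ω x) ?_).trans (measure_mono ?_)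
    · intro x hx x' hx'
      exact contr h hx.2.1 hx'.2.1 hτ
    · rintro _ ⟨x, hx, rfl⟩
      exact ⟨hx.1, (step_mem h hx.2.1 hτ hx.2.2).1⟩
  have := lintegral_mono' hle (le_refl F)
  rwa [lintegral_map hF hm] at this

lemma ftc {n : ℕ} {Ω : Set (EuclideanSpace ℝ (Fin n))} (h : Dom Ω) {p : ℝ} (hp : 1 < p)
    {u : EuclideanSpace ℝ (Fin n) → ℝ} (hu : ContinuousOn u (closure Ω))
    (hd : ∀ x ∈ Ω, DifferentiableAt ℝ u x) {x} (hx : x ∈ DD Ω) :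
    ENNReal.ofReal (|u x| ^ p) ≤ ENNReal.ofReal (|u (yp Ω x)| ^ p) +
      ∫⁻ τ in Ioo 0 (sdist Ω x), ENNReal.ofReal (p * |u (x - τ • gr Ω x)| ^ (p - 1) *
        ‖fderiv ℝ u (x - τ • gr Ω x)‖) := by
  obtain ⟨g1, g2, -⟩ := gr_spec h hx
  set e := gr Ω x with he
  set D := sdist Ω x with hD
  have hD0 : 0 < D := sdist_pos h hx.1
  set φ : ℝ → ℝ := fun τ => |u (x - τ • e)| ^ p with hφ
  have hder : ∀ τ ∈ Ioo 0 D, DifferentiableAt ℝ φ τ ∧ ‖deriv φ τ‖ ≤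
      p * |u (x - τ • e)| ^ (p - 1) * ‖fderiv ℝ u (x - τ • e)‖ := by
    intro τ hτ
    have hz := (step_mem h hx hτ.1.le hτ.2).1
    have h1 : HasDerivAt (fun τ : ℝ => x - τ • e) (-e) τ := by
      simpa using ((hasDerivAt_id τ).smul_const e).const_sub x
    have h2 : HasDerivAt (fun τ : ℝ => u (x - τ • e)) (fderiv ℝ u (x - τ • e) (-e)) τ :=
      (hd _ hz).hasFDerivAt.comp_hasDerivAt τ h1
    have h3 := (hasDerivAt_abs_rpow (u (x - τ • e)) hp).comp τ h2
    have h3 : HasDerivAt φ _ τ := h3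
    refine ⟨h3.differentiableAt, ?_⟩
    rw [h3.deriv, norm_mul]
    have h4 : ‖(fderiv ℝ u (x - τ • e)) (-e)‖ ≤ ‖fderiv ℝ u (x - τ • e)‖ := by
      have := (fderiv ℝ u (x - τ • e)).le_opNorm (-e)
      rwa [norm_neg, g1, mul_one] at this
    have h5 : ‖p * |u (x - τ • e)| ^ (p - 2) * u (x - τ • e)‖ = p * |u (x - τ • e)| ^ (p - 1) := by
      rw [norm_mul, norm_mul, Real.norm_of_nonneg (by linarith : 0 ≤ p), Real.norm_eq_abs,
        Real.norm_eq_abs, abs_of_nonneg (Real.rpow_nonneg (abs_nonneg _) _), mul_assoc]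
      congr 1
      rcases eq_or_ne (u (x - τ • e)) 0 with h0 | h0
      · rw [h0, abs_zero, mul_zero, Real.zero_rpow (by linarith)]
      · rw [← Real.rpow_add_one (abs_ne_zero.2 h0)]
        congr 1; ring
    rw [h5]
    gcongr
  set I := ∫⁻ τ in Ioo 0 D, ENNReal.ofReal (p * |u (x - τ • e)| ^ (p - 1) *
        ‖fderiv ℝ u (x - τ • e)‖) with hI
  by_cases htop : I = ∞
  · rw [htop]; simp
  have hle : ∫⁻ τ in Ioo 0 D, ‖deriv φ τ‖ₑ ≤ I := by
    refine lintegral_mono_ae ((ae_restrict_iff' measurableSet_Ioo).2 (Eventually.of_forall ?_))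
    intro τ hτ
    rw [← ofReal_norm]
    exact ENNReal.ofReal_le_ofReal (hder τ hτ).2
  have hint : IntegrableOn (deriv φ) (Ioo 0 D) :=
    ⟨(measurable_deriv φ).aestronglyMeasurable, lt_of_le_of_lt hle (lt_top_iff_ne_top.2 htop)⟩
  have hcont : ContinuousOn φ (Icc 0 D) := by
    have hmaps : MapsTo (fun τ : ℝ => x - τ • e) (Icc 0 D) (closure Ω) := by
      intro τ hτ
      rcases hτ.2.lt_or_eq with hlt | rfl
      · exact subset_closure (step_mem h hx hτ.1 hlt).1
      · exact frontier_subset_closure g2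
    have h1 : ContinuousOn (fun τ : ℝ => u (x - τ • e)) (Icc 0 D) :=
      hu.comp (by fun_prop) hmaps
    exact h1.abs.rpow_const fun _ _ => Or.inr (by linarith)
  have hF := intervalIntegral.integral_eq_sub_of_hasDerivAt_of_le hD0.le hcont
    (fun τ hτ => (hder τ hτ).1.hasDerivAt)
    ((intervalIntegrable_iff_integrableOn_Ioo_of_le hD0.le).2 hint)
  rw [intervalIntegral.integral_of_le hD0.le, integral_Ioc_eq_integral_Ioo] at hF
  have hn := norm_integral_le_integral_norm (μ := volume.restrict (Ioo 0 D)) (deriv φ)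
  rw [hF, Real.norm_eq_abs] at hn
  have h0 : φ 0 = |u x| ^ p := by simp [hφ]
  have h0' : φ D = |u (yp Ω x)| ^ p := rfl
  rw [← h0, ← h0']
  have hφD : 0 ≤ φ D := by rw [h0']; positivity
  calc ENNReal.ofReal (φ 0) ≤ ENNReal.ofReal (φ D + ∫ τ in Ioo 0 D, ‖deriv φ τ‖) := by
        apply ENNReal.ofReal_le_ofReal
        have := (abs_le.1 hn).1
        linarith
    _ = ENNReal.ofReal (φ D) + ∫⁻ τ in Ioo 0 D, ‖deriv φ τ‖ₑ := by
        rw [ENNReal.ofReal_add hφD (integral_nonneg fun _ => norm_nonneg _),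
          ofReal_integral_norm_eq_lintegral_enorm hint]
    _ ≤ _ := by gcongr


lemma core {n : ℕ} (hn : 1 ≤ n) {Ω : Set (EuclideanSpace ℝ (Fin n))} (h : Dom Ω) {p a : ℝ}
    (hp : 1 < p) (ha : 0 < a) {u : EuclideanSpace ℝ (Fin n) → ℝ} (hu : ContinuousOn u (closure Ω))
    (hd : ∀ x ∈ Ω, DifferentiableAt ℝ u x) :
    ∫⁻ x in Ω, ENNReal.ofReal ((p - 1) * (a + sdist Ω x) ^ (-p)) * ENNReal.ofReal (|u x| ^ p) ≤
      ENNReal.ofReal (a ^ (1 - p)) * ∫⁻ y, ENNReal.ofReal (|u y| ^ p) ∂(surf Ω) +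
      ∫⁻ x in Ω, ENNReal.ofReal ((a + sdist Ω x) ^ (1 - p)) *
        ENNReal.ofReal (p * |u x| ^ (p - 1) * ‖fderiv ℝ u x‖) := by
  have hclm : MeasurableSet (closure Ω) := isClosed_closure.measurableSet
  set w : EuclideanSpace ℝ (Fin n) → ℝ := (closure Ω).indicator u with hw
  have hwm : Measurable w := by
    classical
    have := ContinuousOn.measurable_piecewise (g := (0 : EuclideanSpace ℝ (Fin n) → ℝ)) hu continuousOn_const hclm
    rwa [piecewise_eq_indicator] at this
  have hwu : ∀ z ∈ closure Ω, w z = u z := fun z hz => indicator_of_mem hz u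
  have hδ := (sdist_cont Ω).measurable
  set F : EuclideanSpace ℝ (Fin n) → ℝ≥0∞ := fun z => ENNReal.ofReal (|w z| ^ p) with hF
  have hFm : Measurable F := by fun_prop
  set G : EuclideanSpace ℝ (Fin n) → ℝ≥0∞ :=
    fun z => ENNReal.ofReal (p * |w z| ^ (p - 1) * ‖fderiv ℝ u z‖) with hG
  have hGm : Measurable G := by
    have := (measurable_fderiv ℝ u).norm
    fun_prop
  set g : ℝ → ℝ≥0∞ := fun t => ENNReal.ofReal ((p - 1) * (a + t) ^ (-p)) with hg
  have hgm : Measurable g := by fun_prop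
  have hgr := gr_meas Ω
  -- rewrite the right-hand side
  have r1 : ∫⁻ y, ENNReal.ofReal (|u y| ^ p) ∂(surf Ω) = ∫⁻ y, F y ∂(surf Ω) := by
    refine setLIntegral_congr_fun isClosed_frontier.measurableSet fun y hy => ?_
    simp only [hF, hwu y (frontier_subset_closure hy)]
  have r2 : ∫⁻ x in Ω, ENNReal.ofReal ((a + sdist Ω x) ^ (1 - p)) *
        ENNReal.ofReal (p * |u x| ^ (p - 1) * ‖fderiv ℝ u x‖) =
      ∫⁻ x in Ω, ∫⁻ τ in Ioi (0:ℝ), g (sdist Ω x + τ) * G x := by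
    refine setLIntegral_congr_fun h.op.measurableSet fun x hx => ?_
    rw [lintegral_mul_const _ (by fun_prop)]
    simp only [hG, hwu x (subset_closure hx), hg, ← add_assoc]
    rw [int_g hp (by linarith [sdist_nonneg Ω x] : 0 < a + sdist Ω x)]
  rw [r1, r2, ← setLIntegral_congr (DD_ae Ω)]
  -- the double integral
  have hmT : Measurable fun q : EuclideanSpace ℝ (Fin n) × ℝ =>
      ({q : EuclideanSpace ℝ (Fin n) × ℝ | q.2 < sdist Ω q.1}).indicator
        (fun q => g (sdist Ω q.1) * G (q.1 - q.2 • gr Ω q.1)) q := by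
    refine Measurable.indicator ?_ (measurableSet_lt measurable_snd (hδ.comp measurable_fst))
    refine (hgm.comp (hδ.comp measurable_fst)).mul (hGm.comp ?_)
    exact measurable_fst.sub (measurable_snd.smul (hgr.comp measurable_fst))
  have hpt : ∀ x ∈ DD Ω, ENNReal.ofReal ((p - 1) * (a + sdist Ω x) ^ (-p)) *
      ENNReal.ofReal (|u x| ^ p) ≤ g (sdist Ω x) * F (yp Ω x) +
        ∫⁻ τ in Ioi (0:ℝ), ({q : EuclideanSpace ℝ (Fin n) × ℝ | q.2 < sdist Ω q.1}).indicator
        (fun q => g (sdist Ω q.1) * G (q.1 - q.2 • gr Ω q.1)) (x, τ) := by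
    intro x hx
    have e1 : F (yp Ω x) = ENNReal.ofReal (|u (yp Ω x)| ^ p) := by
      simp only [hF]
      rw [hwu (yp Ω x) (frontier_subset_closure (gr_spec h hx).2.1)]
    have e2 : ∫⁻ τ in Ioi (0:ℝ), ({q : EuclideanSpace ℝ (Fin n) × ℝ | q.2 < sdist Ω q.1}).indicator
        (fun q => g (sdist Ω q.1) * G (q.1 - q.2 • gr Ω q.1)) (x, τ) =
        g (sdist Ω x) * ∫⁻ τ in Ioo 0 (sdist Ω x),
          ENNReal.ofReal (p * |u (x - τ • gr Ω x)| ^ (p - 1) *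
          ‖fderiv ℝ u (x - τ • gr Ω x)‖) := by
      have : ∀ τ : ℝ, ({q : EuclideanSpace ℝ (Fin n) × ℝ | q.2 < sdist Ω q.1}).indicator
        (fun q => g (sdist Ω q.1) * G (q.1 - q.2 • gr Ω q.1)) (x, τ) =
          (Iio (sdist Ω x)).indicator (fun τ => g (sdist Ω x) * G (x - τ • gr Ω x)) τ := by
        intro τ
        simp only [indicator_apply, mem_setOf_eq, mem_Iio]
      simp_rw [this]
      have hm : Measurable fun τ : ℝ => G (x - τ • gr Ω x) :=
        hGm.comp (Continuous.measurable (by fun_prop))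
      rw [lintegral_indicator measurableSet_Iio, Measure.restrict_restrict measurableSet_Iio,
        inter_comm, Ioi_inter_Iio, lintegral_const_mul _ hm]
      congr 1
      refine setLIntegral_congr_fun measurableSet_Ioo fun τ hτ => ?_
      simp only [hG]
      rw [hwu _ (subset_closure (step_mem h hx hτ.1.le hτ.2).1)]
    rw [e1, e2, ← mul_add]
    exact mul_le_mul' le_rfl (ftc h hp hu hd hx)
  refine (setLIntegral_mono' (DD_meas h) hpt).trans ?_
  have hm2 : Measurable fun x => g (sdist Ω x) * F (yp Ω x) :=
    (hgm.comp hδ).mul (hFm.comp (yp_meas Ω))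
  rw [lintegral_add_left hm2]
  refine add_le_add (bdry_int hn h hp ha hFm) ?_
  rw [lintegral_lintegral_swap hmT.aemeasurable,
    lintegral_lintegral_swap (f := fun x τ => g (sdist Ω x + τ) * G x)
      (Measurable.aemeasurable (by fun_prop))]
  refine setLIntegral_mono' measurableSet_Ioi fun τ hτ => ?_
  have hτ : (0:ℝ) < τ := hτ
  refine le_trans (le_of_eq ?_) (push h hτ.le (F := fun z => g (sdist Ω z + τ) * G z) (by fun_prop))
  have hms : MeasurableSet {x | τ < sdist Ω x} := measurableSet_lt measurable_const hδ
  have : ∀ x, ({q : EuclideanSpace ℝ (Fin n) × ℝ | q.2 < sdist Ω q.1}).indicator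
        (fun q => g (sdist Ω q.1) * G (q.1 - q.2 • gr Ω q.1)) (x, τ) =
          {x | τ < sdist Ω x}.indicator (fun x => g (sdist Ω x) * G (x - τ • gr Ω x)) x := by
    intro x
    simp only [indicator_apply, mem_setOf_eq]
  simp_rw [this]
  rw [lintegral_indicator hms, Measure.restrict_restrict hms, inter_comm]
  refine setLIntegral_congr_fun ((DD_meas h).inter hms) fun x hx => ?_
  rw [(step_mem h hx.1 hτ.le hx.2).2, sub_add_cancel]

lemma young_pt {p X Y : ℝ} (hp : 1 < p) (hX : 0 ≤ X) (hY : 0 ≤ Y) :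
    p * X ^ (p - 1) * Y ≤ ((p - 1) / p) ^ (1 - p) * Y ^ p +
      (p - 1) * ((p - 1) / p) * X ^ p := by
  have hp0 : 0 < p := by linarith
  have hp1 : 0 < p - 1 := by linarith
  set c := (p - 1) / p with hc
  have hc0 : 0 < c := by positivity
  have hconj : (p / (p - 1)).HolderConjugate p := by
    have := Real.HolderConjugate.conjExponent hp
    rw [Real.conjExponent] at this
    exact this.symm
  have := Real.young_inequality_of_nonneg (a := (c * X) ^ (p - 1)) (b := Y) (by positivity) hY hconj
  rw [← Real.rpow_mul (by positivity), mul_div_cancel₀ _ hp1.ne',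
    Real.mul_rpow hc0.le hX, Real.mul_rpow hc0.le hX] at this
  have e1 : c ^ (1 - p) * c ^ (p - 1) = 1 := by
    rw [← Real.rpow_add hc0]; simp
  have e2 : c ^ (1 - p) * c ^ p = c := by
    rw [← Real.rpow_add hc0]; simp
  have h2 := mul_le_mul_of_nonneg_left this (by positivity : 0 ≤ p * c ^ (1 - p))
  calc p * X ^ (p - 1) * Y = p * (c ^ (1 - p) * c ^ (p - 1)) * X ^ (p - 1) * Y := by rw [e1]; ring
    _ = p * c ^ (1 - p) * (c ^ (p - 1) * X ^ (p - 1) * Y) := by ring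
    _ ≤ _ := h2
    _ = c ^ (1 - p) * Y ^ p + (p - 1) * (c ^ (1 - p) * c ^ p) * X ^ p := by
        field_simp; ring
    _ = _ := by rw [e2]


lemma lower {n : ℕ} (hn : 1 ≤ n) {Ω : Set (EuclideanSpace ℝ (Fin n))} (h : Dom Ω) {p σ : ℝ}
    (hp : 1 < p) (hσ : 0 < σ) : ENNReal.ofReal (((p - 1) / p) ^ p) ≤ lamC p Ω σ := by
  have hp0 : 0 < p := by linarith
  have hp1 : 0 < p - 1 := by linarith
  unfold lamC
  refine le_iInf fun u => le_iInf fun hu => le_iInf fun hW0 => ?_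
  obtain ⟨hu1, hu2, hu3, hu4⟩ := hu
  set c := (p - 1) / p with hc
  have hc0 : 0 < c := by positivity
  have hc1 : c < 1 := by rw [hc, div_lt_one hp0]; linarith
  set a := alphaC p σ with ha
  have ha0 : 0 < a := by
    rw [ha, alphaC]; positivity
  have haσ : a ^ (1 - p) = c ^ (1 - p) * σ := by
    rw [ha, alphaC, Real.mul_rpow hc0.le (by positivity), ← Real.rpow_mul hσ.le,
      one_div_mul_cancel (by linarith), Real.rpow_one]
  have hpos : ∀ x, 0 < a + sdist Ω x := fun x => by linarith [sdist_nonneg Ω x]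
  have key := core hn h hp ha0 hu1 hu2
  set W := wnormC p Ω σ u with hWd
  set D := ∫⁻ x in Ω, ENNReal.ofReal (‖fderiv ℝ u x‖ ^ p) with hD
  set S := ∫⁻ y, ENNReal.ofReal (|u y| ^ p) ∂(surf Ω) with hS
  have hQ : QpC p Ω σ u = D + ENNReal.ofReal σ * S := rfl
  have hWtop : W ≠ ∞ := by
    have : W ≤ ENNReal.ofReal (a ^ (-p)) * ∫⁻ x in Ω, ENNReal.ofReal (|u x| ^ p) := by
      rw [← lintegral_const_mul' _ _ ENNReal.ofReal_ne_top]
      refine lintegral_mono fun x => ?_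
      rw [← ENNReal.ofReal_mul (by positivity), add_comm, ← ha, div_eq_inv_mul,
        ← Real.rpow_neg (hpos x).le]
      refine ENNReal.ofReal_le_ofReal (mul_le_mul_of_nonneg_right ?_ (by positivity))
      exact Real.rpow_le_rpow_of_nonpos ha0 (by linarith [sdist_nonneg Ω x]) (by linarith)
    exact ne_top_of_le_ne_top (ENNReal.mul_ne_top ENNReal.ofReal_ne_top hu3) this
  have l1 : ∫⁻ x in Ω, ENNReal.ofReal ((p - 1) * (a + sdist Ω x) ^ (-p)) *
      ENNReal.ofReal (|u x| ^ p) = ENNReal.ofReal (p - 1) * W := by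
    rw [hWd, wnormC, ← lintegral_const_mul' _ _ ENNReal.ofReal_ne_top]
    refine lintegral_congr fun x => ?_
    have := hpos x
    rw [← ENNReal.ofReal_mul (by positivity), ← ENNReal.ofReal_mul hp1.le, add_comm (sdist Ω x),
      ← ha, Real.rpow_neg this.le]
    congr 1
    ring
  have l2 : ∫⁻ x in Ω, ENNReal.ofReal ((a + sdist Ω x) ^ (1 - p)) *
        ENNReal.ofReal (p * |u x| ^ (p - 1) * ‖fderiv ℝ u x‖) ≤
      ENNReal.ofReal (c ^ (1 - p)) * D + ENNReal.ofReal ((p - 1) * c) * W := by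
    rw [hWd, wnormC, hD, ← lintegral_const_mul' _ _ ENNReal.ofReal_ne_top,
      ← lintegral_const_mul' _ _ ENNReal.ofReal_ne_top, ← lintegral_add_left]
    · refine lintegral_mono fun x => ?_
      have hx := hpos x
      rw [← ENNReal.ofReal_mul (by positivity), ← ENNReal.ofReal_mul (by positivity),
        ← ENNReal.ofReal_mul (by positivity), add_comm (sdist Ω x), ← ha,
        ← ENNReal.ofReal_add (by positivity) (by positivity)]
      refine ENNReal.ofReal_le_ofReal ?_
      have := young_pt (X := |u x| / (a + sdist Ω x)) (Y := ‖fderiv ℝ u x‖) hp (by positivity)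
        (by positivity)
      rw [Real.div_rpow (by positivity) hx.le, Real.div_rpow (by positivity) hx.le] at this
      refine le_trans (le_of_eq ?_) this
      have e : 1 - p = -(p - 1) := by ring
      rw [e, Real.rpow_neg hx.le]
      field_simp
    · have := (measurable_fderiv ℝ u).norm
      fun_prop
  have fin : ENNReal.ofReal (p - 1) * W ≤ ENNReal.ofReal (c ^ (1 - p)) * QpC p Ω σ u +
      ENNReal.ofReal ((p - 1) * c) * W := by
    rw [l1] at key
    refine (key.trans (add_le_add le_rfl l2)).trans (le_of_eq ?_)
    rw [haσ, ENNReal.ofReal_mul (by positivity), hQ]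
    ring
  rw [ENNReal.le_div_iff_mul_le (Or.inl hW0) (Or.inl hWtop)]
  by_cases hQt : QpC p Ω σ u = ∞
  · rw [hQt]; exact le_top
  generalize QpC p Ω σ u = Q at *
  rw [← ENNReal.ofReal_toReal hQt, ← ENNReal.ofReal_toReal hWtop] at fin ⊢
  have hQ0 : 0 ≤ Q.toReal := ENNReal.toReal_nonneg
  have hW1 : 0 ≤ W.toReal := ENNReal.toReal_nonneg
  generalize Q.toReal = q at *
  generalize W.toReal = w at *
  rw [← ENNReal.ofReal_mul (by positivity), ← ENNReal.ofReal_mul (by positivity),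
    ← ENNReal.ofReal_mul (by positivity),
    ← ENNReal.ofReal_add (by positivity) (by positivity),
    ENNReal.ofReal_le_ofReal_iff (by positivity)] at fin
  rw [← ENNReal.ofReal_mul (by positivity)]
  refine ENNReal.ofReal_le_ofReal ?_
  have h3 : c * w ≤ c ^ (1 - p) * q := by
    have : (p - 1) * (1 - c) = c := by rw [hc]; field_simp; ring
    calc c * w = (p - 1) * w - (p - 1) * c * w := by linear_combination -w * this
      _ ≤ _ := by linarith
  have e2 : c ^ (p - 1) * c ^ (1 - p) = 1 := by
    rw [← Real.rpow_add hc0]; simp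
  have e3 : c ^ (p - 1) * c = c ^ p := by
    rw [← Real.rpow_add_one hc0.ne']; simp
  have h4 := mul_le_mul_of_nonneg_left h3 (by positivity : 0 ≤ c ^ (p - 1))
  rwa [← mul_assoc, ← mul_assoc, e2, e3, one_mul] at h4

lemma ball_C2 {n : ℕ} {R : ℝ} (hR : 0 < R) :
    HasC2Boundary (ball (0 : EuclideanSpace ℝ (Fin n)) R) := by
  intro x hx
  rw [frontier_ball _ hR.ne'] at hx ⊢
  refine ⟨{0}ᶜ, fun y => ‖y‖ ^ 2 - R ^ 2, isOpen_compl_singleton, ?_, ?_, ?_, ?_, ?_⟩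
  · intro h0
    rw [mem_singleton_iff] at h0
    rw [h0, mem_sphere, dist_self] at hx
    exact hR.ne hx
  · exact (contDiff_norm_sq ℝ).sub contDiff_const
  · intro y hy h0
    have h1 := ((hasStrictFDerivAt_norm_sq y).hasFDerivAt.sub_const (R ^ 2)).fderiv
    rw [h1] at h0
    have h2 := congrArg (fun l => l y) h0
    simp at h2
    exact hy h2
  · ext y
    simp only [mem_inter_iff, mem_ball_zero_iff, mem_setOf_eq, sub_neg]
    rw [and_comm, pow_lt_pow_iff_left₀ (norm_nonneg y) hR.le two_ne_zero]
  · ext y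
    simp only [mem_inter_iff, mem_sphere_zero_iff_norm, mem_setOf_eq, sub_eq_zero]
    rw [and_comm, pow_left_inj₀ (norm_nonneg y) hR.le two_ne_zero]

lemma sdist_ball {n : ℕ} (hn : 1 ≤ n) {R : ℝ} (hR : 0 < R) {x : EuclideanSpace ℝ (Fin n)}
    (hx : ‖x‖ ≤ R) : sdist (ball (0 : EuclideanSpace ℝ (Fin n)) R) x ≤ R - ‖x‖ := by
  have hne : Nonempty (Fin n) := ⟨⟨0, hn⟩⟩
  have : ∃ e : EuclideanSpace ℝ (Fin n), ‖e‖ = 1 ∧ x = ‖x‖ • e := by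
    by_cases h0 : x = 0
    · obtain ⟨e, he⟩ := exists_norm_eq (EuclideanSpace ℝ (Fin n)) zero_le_one
      exact ⟨e, he, by simp [h0]⟩
    · refine ⟨‖x‖⁻¹ • x, norm_smul_inv_norm h0, ?_⟩
      rw [smul_smul, mul_inv_cancel₀ (norm_ne_zero_iff.2 h0), one_smul]
  obtain ⟨e, he, hxe⟩ := this
  have hm : R • e ∈ frontier (ball (0 : EuclideanSpace ℝ (Fin n)) R) := by
    rw [frontier_ball _ hR.ne', mem_sphere_zero_iff_norm, norm_smul, he, Real.norm_of_nonneg hR.le,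
      mul_one]
  refine (infDist_le_dist_of_mem hm).trans (le_of_eq ?_)
  rw [dist_comm, dist_eq_norm]
  nth_rw 1 [hxe]
  rw [← sub_smul, norm_smul, he, mul_one, Real.norm_of_nonneg (by linarith)]

/-- the smoothed distance -/
def sm (n : ℕ) (R a : ℝ) (x : EuclideanSpace ℝ (Fin n)) : ℝ :=
  √(R ^ 2 + 1) - √(‖x‖ ^ 2 + 1) + a

lemma sqrt_b {t : ℝ} (ht : 0 ≤ t) : t ≤ √(t ^ 2 + 1) ∧ 1 ≤ √(t ^ 2 + 1) ∧ √(t ^ 2 + 1) ≤ t + 1 := by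
  refine ⟨Real.le_sqrt_of_sq_le (by linarith), Real.le_sqrt_of_sq_le (by nlinarith), ?_⟩
  exact Real.sqrt_le_iff.2 ⟨by linarith, by nlinarith⟩

lemma sm_cont (n : ℕ) (R a : ℝ) : Continuous (sm n R a) := by
  unfold sm; fun_prop

lemma sm_ge {n : ℕ} {R a : ℝ} {x : EuclideanSpace ℝ (Fin n)} (hx : ‖x‖ ≤ R) : a ≤ sm n R a x := by
  have : √(‖x‖ ^ 2 + 1) ≤ √(R ^ 2 + 1) := Real.sqrt_le_sqrt (by gcongr)
  unfold sm; linarith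

lemma sm_le {n : ℕ} {R a : ℝ} (hR : 0 ≤ R) (x : EuclideanSpace ℝ (Fin n)) : sm n R a x ≤ R + a := by
  have h1 := (sqrt_b hR).2.2
  have h2 := (sqrt_b (norm_nonneg x)).2.1
  unfold sm; linarith

lemma sm_dist {n : ℕ} {R a : ℝ} (hR : 0 ≤ R) (x : EuclideanSpace ℝ (Fin n)) :
    R - ‖x‖ + a ≤ sm n R a x + 1 := by
  have h1 := (sqrt_b hR).1
  have h2 := (sqrt_b (norm_nonneg x)).2.2
  unfold sm; linarith

lemma sm_deriv {n : ℕ} (R a : ℝ) (x : EuclideanSpace ℝ (Fin n)) :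
    ∃ l : EuclideanSpace ℝ (Fin n) →L[ℝ] ℝ, HasFDerivAt (sm n R a) l x ∧ ‖l‖ ≤ 1 := by
  have hpos : (0:ℝ) < ‖x‖ ^ 2 + 1 := by positivity
  have h1 := ((hasStrictFDerivAt_norm_sq x).hasFDerivAt.add_const 1).sqrt hpos.ne'
  have h2 := (h1.const_sub (√(R ^ 2 + 1))).add_const a
  refine ⟨_, h2, ?_⟩
  have h3 := sqrt_b (norm_nonneg x)
  rw [norm_neg, norm_smul, two_smul, ← two_smul ℝ, norm_smul, innerSL_apply_norm,
    Real.norm_of_nonneg (by positivity), Real.norm_of_nonneg (by positivity)]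
  have : 0 < √(‖x‖ ^ 2 + 1) := by linarith [h3.2.1]
  rw [div_mul_eq_mul_div, div_le_one (by positivity)]
  linarith [h3.1]

lemma scal_M {p β a r : ℝ} (hp : 1 < p) (hβ : 0 < β) (hβ1 : β < 1) (hr0 : 0 < r) (hr : r < 1)
    (ha : 0 < a) : ∃ M : ℝ, 0 < M ∧ ∀ s, M ≤ s →
      r * s ^ ((β - 1) * p) ≤ (s ^ β - a ^ β) ^ p / (s + 1) ^ p ∧ a ^ β < s ^ β := by
  have hp0 : 0 < p := by linarith
  set k := r ^ p⁻¹ with hk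
  have hk0 : 0 < k := by positivity
  have hk1 : k < 1 := Real.rpow_lt_one hr0.le hr (by positivity)
  have hkp : k ^ p = r := by rw [hk, Real.rpow_inv_rpow hr0.le hp0.ne']
  have ht := (tendsto_rpow_atTop hβ).eventually_ge_atTop ((k + a ^ β) / (1 - k))
  obtain ⟨M, hM⟩ := eventually_atTop.1 ht
  refine ⟨max M 1, by positivity, fun s hs => ?_⟩
  have hs1 : 1 ≤ s := (le_max_right _ _).trans hs
  have hs0 : 0 < s := by linarith
  have h1 := hM s ((le_max_left _ _).trans hs)
  rw [div_le_iff₀ (by linarith)] at h1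
  have h2 : s ^ (β - 1) ≤ 1 := Real.rpow_le_one_of_one_le_of_nonpos hs1 (by linarith)
  have h3 : s ^ (β - 1) * s = s ^ β := by
    rw [← Real.rpow_add_one hs0.ne']; simp
  have hsb : 0 < s ^ β := by positivity
  have hab : 0 < a ^ β := by positivity
  have h4 : k * s ^ (β - 1) * (s + 1) ≤ s ^ β - a ^ β := by
    have : k * s ^ (β - 1) * (s + 1) = k * (s ^ (β - 1) * s) + k * s ^ (β - 1) := by ring
    rw [this, h3]
    nlinarith
  refine ⟨?_, by nlinarith⟩
  rw [le_div_iff₀ (by positivity)]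
  have h5 := Real.rpow_le_rpow (by positivity) h4 hp0.le
  rw [Real.mul_rpow (by positivity) (by positivity), Real.mul_rpow (by positivity) (by positivity),
    hkp, ← Real.rpow_mul hs0.le] at h5
  exact h5

lemma scal_R {q a r M : ℝ} (n : ℕ) (hq0 : 0 < q) (hq : q < 1) (hr : r < 1) (ha : 0 < a) (hM : 0 < M) :
    ∃ R : ℝ, M + 1 < R ∧
      a ^ (-q) * (R ^ n - (R - M - 1) ^ n) ≤ (1 - r) * ((R + a) ^ (-q) * R ^ n) := by
  have ht := (tendsto_rpow_neg_atTop (y := 1 - q) (by linarith)).const_mul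
    (a ^ (-q) * n * (M + 1) * 2 ^ q)
  rw [mul_zero] at ht
  have hev := ht.eventually_le_const (by linarith : 0 < 1 - r)
  obtain ⟨R, h1, h2, h3⟩ := (hev.and ((eventually_gt_atTop (M + 1)).and (eventually_ge_atTop a))).exists
  have hR : 0 < R := by linarith
  refine ⟨R, h2, ?_⟩
  set z := (M + 1) / R with hz
  have hz1 : z < 1 := by rw [hz, div_lt_one hR]; exact h2
  have hb := one_add_mul_le_pow (a := -z) (by linarith) n
  have hR' : R - M - 1 = R * (1 + -z) := by rw [hz]; field_simp; ring
  have h4 : R ^ n - (R - M - 1) ^ n ≤ n * z * R ^ n := by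
    rw [hR', mul_pow]
    have := mul_le_mul_of_nonneg_left hb (by positivity : 0 ≤ R ^ n)
    linarith
  have h5 : a ^ (-q) * n * z * (R + a) ^ q ≤ 1 - r := by
    have h6 : (R + a) ^ q ≤ (2 * R) ^ q := Real.rpow_le_rpow (by linarith) (by linarith) hq0.le
    rw [Real.mul_rpow (by norm_num) hR.le] at h6
    have h7 : R ^ q / R = R ^ (-(1 - q)) := by
      rw [← Real.rpow_sub_one hR.ne']; congr 1; ring
    calc a ^ (-q) * n * z * (R + a) ^ q ≤ a ^ (-q) * n * z * (2 ^ q * R ^ q) :=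
          mul_le_mul_of_nonneg_left h6 (by positivity)
      _ = a ^ (-q) * n * (M + 1) * 2 ^ q * (R ^ q / R) := by rw [hz]; ring
      _ ≤ _ := by rw [h7]; exact h1
  have h8 : (R + a) ^ q * (R + a) ^ (-q) = 1 := by
    rw [← Real.rpow_add (by linarith)]; simp
  calc a ^ (-q) * (R ^ n - (R - M - 1) ^ n) ≤ a ^ (-q) * (n * z * R ^ n) :=
        mul_le_mul_of_nonneg_left h4 (by positivity)
    _ = a ^ (-q) * n * z * ((R + a) ^ q * (R + a) ^ (-q)) * R ^ n := by rw [h8]; ring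
    _ = a ^ (-q) * n * z * (R + a) ^ q * ((R + a) ^ (-q) * R ^ n) := by ring
    _ ≤ _ := mul_le_mul_of_nonneg_right h5 (by positivity)

lemma upper {n : ℕ} (hn : 1 ≤ n) {p σ A : ℝ} (hp : 1 < p) (hσ : 0 < σ)
    (hA : ((p - 1) / p) ^ p < A) :
    ∃ R : ℝ, 0 < R ∧ lamC p (ball (0 : EuclideanSpace ℝ (Fin n)) R) σ ≤ ENNReal.ofReal A := by
  have hp0 : 0 < p := by linarith
  have hp1 : 0 < p - 1 := by linarith
  set c := (p - 1) / p with hc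
  have hc0 : 0 < c := by positivity
  have hc1 : c < 1 := by rw [hc, div_lt_one hp0]; linarith
  have hA0 : 0 < A := lt_trans (by positivity) hA
  set a := alphaC p σ with ha
  have ha0 : 0 < a := by
    rw [ha, alphaC]; positivity
  have hcb : c < min 1 (A ^ p⁻¹) := by
    refine lt_min hc1 ?_
    rw [Real.lt_rpow_inv_iff_of_pos hc0.le hA0.le hp0]
    exact hA
  obtain ⟨β, hβc, hβ⟩ := exists_between hcb
  have hβ1 : β < 1 := hβ.trans_le (min_le_left _ _)
  have hβ0 : 0 < β := hc0.trans hβc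
  have hβA : β ^ p < A := by
    have := hβ.trans_le (min_le_right _ _)
    rwa [Real.lt_rpow_inv_iff_of_pos hβ0.le hA0.le hp0] at this
  set ρ := β ^ p / A with hρ
  have hρ0 : 0 < ρ := by positivity
  have hρ1 : ρ < 1 := by rw [hρ, div_lt_one hA0]; exact hβA
  set r := √ρ with hr
  have hr0 : 0 < r := Real.sqrt_pos.2 hρ0
  have hrr : r * r = ρ := Real.mul_self_sqrt hρ0.le
  have hr1 : r < 1 := by nlinarith
  set q := (1 - β) * p with hq
  have hq0 : 0 < q := mul_pos (by linarith) hp0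
  have hq1 : q < 1 := by
    have : c * p = p - 1 := by rw [hc]; field_simp
    nlinarith
  have hqn : (β - 1) * p = -q := by rw [hq]; ring
  obtain ⟨M, hM0, hM⟩ := scal_M hp hβ0 hβ1 hr0 hr1 ha0
  obtain ⟨R, hRM, hR⟩ := scal_R n hq0 hq1 hr1 ha0 hM0
  rw [hqn] at hM
  have hR0 : 0 < R := by linarith
  refine ⟨R, hR0, ?_⟩
  set B := ball (0 : EuclideanSpace ℝ (Fin n)) R with hB
  have hBm : MeasurableSet B := measurableSet_ball
  have hBn : ∀ x ∈ B, ‖x‖ ≤ R := fun x hx => (mem_ball_zero_iff.1 hx).le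
  set s := sm n R a with hs
  have hsc : Continuous s := sm_cont n R a
  have hsa : ∀ x ∈ B, a ≤ s x := fun x hx => sm_ge (hBn x hx)
  have hs0 : ∀ x ∈ B, 0 < s x := fun x hx => ha0.trans_le (hsa x hx)
  have hsR : ∀ x, s x ≤ R + a := fun x => sm_le hR0.le x
  set u : EuclideanSpace ℝ (Fin n) → ℝ := fun x => s x ^ β - a ^ β with hu
  have huc : Continuous u := by
    have : Continuous fun x => s x ^ β := hsc.rpow_const fun x => Or.inr hβ0.le
    exact this.sub continuous_const
  have hud : ∀ x ∈ B, DifferentiableAt ℝ u x ∧ ‖fderiv ℝ u x‖ ≤ β * s x ^ (β - 1) := by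
    intro x hx
    obtain ⟨l, hl, hl1⟩ := sm_deriv R a x
    have h1 := (hl.rpow_const (p := β) (Or.inl (hs0 x hx).ne')).sub_const (a ^ β)
    have h0 := hs0 x hx
    refine ⟨h1.differentiableAt, ?_⟩
    rw [h1.fderiv, norm_smul, Real.norm_of_nonneg (by positivity)]
    exact mul_le_of_le_one_right (by positivity) hl1
  have hu0 : ∀ x ∈ B, 0 ≤ u x := fun x hx =>
    sub_nonneg.2 (Real.rpow_le_rpow ha0.le (hsa x hx) hβ0.le)
  have huR : ∀ x ∈ B, |u x| ≤ (R + a) ^ β := by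
    intro x hx
    rw [abs_of_nonneg (hu0 x hx)]
    have : s x ^ β ≤ (R + a) ^ β := Real.rpow_le_rpow (hs0 x hx).le (hsR x) hβ0.le
    have : 0 < a ^ β := by positivity
    simp only [hu]; linarith
  set V := volume (ball (0 : EuclideanSpace ℝ (Fin n)) 1) with hV
  have hV0 : V ≠ 0 := (measure_ball_pos _ _ one_pos).ne'
  have hVt : V ≠ ∞ := measure_ball_lt_top.ne
  have hvol : ∀ t, 0 ≤ t → volume (ball (0 : EuclideanSpace ℝ (Fin n)) t) =
      ENNReal.ofReal (t ^ n) * V := by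
    intro t ht
    have hne : Nonempty (Fin n) := ⟨⟨0, hn⟩⟩
    rw [Measure.addHaar_ball _ _ ht, finrank_euclideanSpace_fin]
  have hBt : volume B ≠ ∞ := measure_ball_lt_top.ne
  set J : EuclideanSpace ℝ (Fin n) → ℝ≥0∞ := fun x => ENNReal.ofReal (s x ^ (-q)) with hJ
  have hJm : Measurable J := by
    have := hsc.measurable
    fun_prop
  set I := ∫⁻ x in B, J x with hI
  have hJle : ∀ x ∈ B, J x ≤ ENNReal.ofReal (a ^ (-q)) := fun x hx =>
    ENNReal.ofReal_le_ofReal (Real.rpow_le_rpow_of_nonpos ha0 (hsa x hx) (by linarith))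
  have hbd : ∀ (f : EuclideanSpace ℝ (Fin n) → ℝ≥0∞) (C : ℝ≥0∞) (T : Set (EuclideanSpace ℝ (Fin n))),
      MeasurableSet T → (∀ x ∈ T, f x ≤ C) → ∫⁻ x in T, f x ≤ C * volume T := by
    intro f C T hT hf
    refine (setLIntegral_mono' hT hf).trans ?_
    rw [setLIntegral_const]
  have hIt : I ≠ ∞ := ne_top_of_le_ne_top (ENNReal.mul_ne_top ENNReal.ofReal_ne_top hBt)
    (hbd J _ B hBm hJle)
  have hIge : ENNReal.ofReal ((R + a) ^ (-q)) * volume B ≤ I := by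
    rw [← setLIntegral_const]
    refine setLIntegral_mono' hBm fun x hx => ENNReal.ofReal_le_ofReal ?_
    exact Real.rpow_le_rpow_of_nonpos (hs0 x hx) (hsR x) (by linarith)
  have hI0 : I ≠ 0 := by
    refine (lt_of_lt_of_le (ENNReal.mul_pos ?_ (measure_ball_pos _ _ hR0).ne') hIge).ne'
    have : 0 < (R + a) ^ (-q) := by positivity
    exact (ENNReal.ofReal_pos.2 this).ne'
  -- gradient
  have hgrad : ∫⁻ x in B, ENNReal.ofReal (‖fderiv ℝ u x‖ ^ p) ≤ ENNReal.ofReal (β ^ p) * I := by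
    rw [hI, ← lintegral_const_mul' _ _ ENNReal.ofReal_ne_top]
    refine setLIntegral_mono' hBm fun x hx => ?_
    have h0 := hs0 x hx
    rw [hJ, ← ENNReal.ofReal_mul (by positivity)]
    refine ENNReal.ofReal_le_ofReal ?_
    have := Real.rpow_le_rpow (norm_nonneg _) (hud x hx).2 hp0.le
    rwa [Real.mul_rpow hβ0.le (by positivity), ← Real.rpow_mul h0.le, hqn] at this
  have hmem : MemW1p p B u := by
    refine ⟨huc.continuousOn, fun x hx => (hud x hx).1, ?_, ?_⟩
    · refine ne_top_of_le_ne_top (ENNReal.mul_ne_top ENNReal.ofReal_ne_top hBt)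
        (hbd _ (ENNReal.ofReal (((R + a) ^ β) ^ p)) B hBm fun x hx => ?_)
      exact ENNReal.ofReal_le_ofReal (Real.rpow_le_rpow (abs_nonneg _) (huR x hx) hp0.le)
    · exact ne_top_of_le_ne_top (ENNReal.mul_ne_top ENNReal.ofReal_ne_top hIt) hgrad
  have hsurf : ∫⁻ y, ENNReal.ofReal (|u y| ^ p) ∂(surf B) = 0 := by
    have : ∫⁻ y, ENNReal.ofReal (|u y| ^ p) ∂(surf B) = ∫⁻ y, 0 ∂(surf B) := by
      refine setLIntegral_congr_fun isClosed_frontier.measurableSet fun y hy => ?_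
      rw [hB, frontier_ball _ hR0.ne', mem_sphere_zero_iff_norm] at hy
      have : u y = 0 := by simp [hu, hs, sm, hy]
      rw [this]
      simp [Real.zero_rpow hp0.ne']
    rw [this, lintegral_zero]
  have hQ : QpC p B σ u ≤ ENNReal.ofReal (β ^ p) * I := by
    rw [QpC, hsurf, mul_zero, add_zero]; exact hgrad
  -- splitting
  set T := {x | M ≤ s x} with hT
  have hTm : MeasurableSet T := measurableSet_le measurable_const hsc.measurable
  have hsplit : I = (∫⁻ x in B ∩ T, J x) + ∫⁻ x in B \ T, J x :=
    (lintegral_inter_add_diff J B hTm).symm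
  have hsmall : ∫⁻ x in B \ T, J x ≤ ENNReal.ofReal (1 - r) * I := by
    have hsub : B \ T ⊆ B \ ball 0 (R - M - 1) := by
      rintro x ⟨hx1, hx2⟩
      refine ⟨hx1, fun hx3 => hx2 ?_⟩
      have h1 := mem_ball_zero_iff.1 hx3
      have h2 := sm_dist (a := a) hR0.le x
      change M ≤ sm n R a x
      linarith
    have hv : volume (B \ T) ≤ ENNReal.ofReal (R ^ n - (R - M - 1) ^ n) * V := by
      refine (measure_mono hsub).trans ?_
      rw [measure_diff (ball_subset_ball (by linarith)) measurableSet_ball.nullMeasurableSet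
        measure_ball_lt_top.ne, hvol R hR0.le, hvol _ (by linarith),
        ENNReal.ofReal_sub _ (pow_nonneg (by linarith) n), ENNReal.sub_mul fun _ _ => hVt]
    calc ∫⁻ x in B \ T, J x ≤ ENNReal.ofReal (a ^ (-q)) * volume (B \ T) :=
          hbd J _ _ (hBm.diff hTm) fun x hx => hJle x hx.1
      _ ≤ ENNReal.ofReal (a ^ (-q)) * (ENNReal.ofReal (R ^ n - (R - M - 1) ^ n) * V) := by gcongr
      _ = ENNReal.ofReal (a ^ (-q) * (R ^ n - (R - M - 1) ^ n)) * V := by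
          rw [ENNReal.ofReal_mul (by positivity), mul_assoc]
      _ ≤ ENNReal.ofReal ((1 - r) * ((R + a) ^ (-q) * R ^ n)) * V := by gcongr
      _ = ENNReal.ofReal (1 - r) * (ENNReal.ofReal ((R + a) ^ (-q)) * volume B) := by
          rw [hvol R hR0.le, ENNReal.ofReal_mul (by linarith), ENNReal.ofReal_mul (by positivity)]
          ring
      _ ≤ _ := by gcongr
  have hbig : ENNReal.ofReal r * I ≤ ∫⁻ x in B ∩ T, J x := by
    have h1 : ENNReal.ofReal r * I + ENNReal.ofReal (1 - r) * I = I := by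
      rw [← add_mul, ← ENNReal.ofReal_add hr0.le (by linarith)]; simp
    have h2 : ENNReal.ofReal r * I + ENNReal.ofReal (1 - r) * I ≤
        (∫⁻ x in B ∩ T, J x) + ENNReal.ofReal (1 - r) * I := by
      rw [h1]
      exact hsplit.le.trans (add_le_add le_rfl hsmall)
    exact (ENNReal.add_le_add_iff_right (ENNReal.mul_ne_top ENNReal.ofReal_ne_top hIt)).1 h2
  have hW : ENNReal.ofReal ρ * I ≤ wnormC p B σ u := by
    calc ENNReal.ofReal ρ * I = ENNReal.ofReal r * (ENNReal.ofReal r * I) := by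
          rw [← hrr, ENNReal.ofReal_mul hr0.le, mul_assoc]
      _ ≤ ENNReal.ofReal r * ∫⁻ x in B ∩ T, J x := by gcongr
      _ = ∫⁻ x in B ∩ T, ENNReal.ofReal r * J x := by
          rw [lintegral_const_mul' _ _ ENNReal.ofReal_ne_top]
      _ ≤ ∫⁻ x in B ∩ T, ENNReal.ofReal (|u x| ^ p / (sdist B x + alphaC p σ) ^ p) := by
          refine setLIntegral_mono' (hBm.inter hTm) fun x hx => ?_
          have h0 := hs0 x hx.1
          rw [hJ, ← ENNReal.ofReal_mul hr0.le]
          refine ENNReal.ofReal_le_ofReal ((hM (s x) hx.2).1.trans ?_)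
          rw [abs_of_nonneg (hu0 x hx.1), ← ha]
          have hd0 := sdist_nonneg B x
          have hd1 := sdist_ball hn hR0 (hBn x hx.1)
          have hd2 := sm_dist (a := a) hR0.le x
          have hle : sdist B x + a ≤ s x + 1 := by linarith
          refine div_le_div_of_nonneg_left (Real.rpow_nonneg (hu0 x hx.1) _) (by positivity) ?_
          exact Real.rpow_le_rpow (by positivity) hle hp0.le
      _ ≤ wnormC p B σ u := lintegral_mono_set inter_subset_left
  have hW0 : wnormC p B σ u ≠ 0 :=
    (lt_of_lt_of_le (ENNReal.mul_pos (ENNReal.ofReal_pos.2 hρ0).ne' hI0) hW).ne'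
  unfold lamC
  refine iInf_le_of_le u (iInf_le_of_le hmem (iInf_le_of_le hW0 ?_))
  refine ENNReal.div_le_of_le_mul (hQ.trans ?_)
  calc ENNReal.ofReal (β ^ p) * I = ENNReal.ofReal A * (ENNReal.ofReal ρ * I) := by
        rw [← mul_assoc, ← ENNReal.ofReal_mul hA0.le, hρ, mul_div_cancel₀ _ hA0.ne']
    _ ≤ _ := by gcongr

theorem inf_lam_over_convex (n : ℕ) (hn : 1 ≤ n) (p σ : ℝ) (hp : 1 < p) (hσ : 0 < σ) :
    (⨅ (Ω : Set (EuclideanSpace ℝ (Fin n)))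
      (_ : IsOpen Ω ∧ Ω.Nonempty ∧ IsBounded Ω ∧ Convex ℝ Ω ∧ HasC2Boundary Ω),
        lamC p Ω σ) = ENNReal.ofReal (((p - 1) / p) ^ p) := by
  refine le_antisymm ?_ ?_
  · refine le_of_forall_gt_imp_ge_of_dense fun b hb => ?_
    by_cases hbt : b = ∞
    · rw [hbt]; exact le_top
    rw [← ENNReal.ofReal_toReal hbt] at hb ⊢
    obtain ⟨R, hR, h⟩ := upper hn hp hσ (ENNReal.ofReal_lt_ofReal_iff_of_nonneg
      (Real.rpow_nonneg (div_nonneg (by linarith) (by linarith)) _) |>.1 hb)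
    exact iInf₂_le_of_le (ball 0 R) ⟨isOpen_ball, nonempty_ball.2 hR, isBounded_ball,
      convex_ball 0 R, ball_C2 hR⟩ h
  · exact le_iInf₂ fun Ω h => lower hn (dom_of hn h.1 h.2.1 h.2.2.1 h.2.2.2.1) hp hσ

end RobinHardy
end
end

section
/- Let p > n ≥ 1, R > 0 and σ > 0, and let B_R^c = {x ∈ ℝ^n : |x| > R}. Then for every u ∈ W^{1,p}(B_R^c), ∫_{B_R^c} |∇u(x)|^p dx + σ ∫_{∂B_R} |u|^p dν ≥ C(σ,R) ∫_{B_R^c} |u(x)|^p/|x|^p dx, where C(σ,R) = min{ ((p-n)/p)^p , R^p·σ^{p/(p-1)} } and dν is the surface measure on the sphere ∂B_R = {x : |x| = R}, the boundary values of u being understood via the trace. -/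
open MeasureTheory Metric Set Filter Bornology
open scoped ENNReal Topology

noncomputable section

namespace RobinHardy

open scoped Pointwise in
/-- volume of a flat cone -/
theorem vol_cone (m : ℕ) (G : Set (Fin m → ℝ)) (hG : MeasurableSet G) :
    (volume : Measure (ℝ × (Fin m → ℝ))) {q | q.1 ∈ Ioo (0:ℝ) 1 ∧ q.1⁻¹ • q.2 ∈ G}
      = ENNReal.ofReal (1 / (m + 1)) * volume G := by
  have hm : MeasurableSet {q : ℝ × (Fin m → ℝ) | q.1 ∈ Ioo (0:ℝ) 1 ∧ q.1⁻¹ • q.2 ∈ G} := by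
    apply MeasurableSet.inter
    · exact measurable_fst measurableSet_Ioo
    · have : Measurable (fun q : ℝ × (Fin m → ℝ) => q.1⁻¹ • q.2) := by fun_prop
      exact this hG
  rw [Measure.volume_eq_prod, Measure.prod_apply hm]
  have h1 : ∀ t : ℝ, volume (Prod.mk t ⁻¹' {q : ℝ × (Fin m → ℝ) | q.1 ∈ Ioo (0:ℝ) 1 ∧ q.1⁻¹ • q.2 ∈ G})
      = (Ioo (0:ℝ) 1).indicator (fun t => ENNReal.ofReal (t ^ m) * volume G) t := by
    intro t
    by_cases ht : t ∈ Ioo (0:ℝ) 1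
    · rw [indicator_of_mem ht]
      have : Prod.mk t ⁻¹' {q : ℝ × (Fin m → ℝ) | q.1 ∈ Ioo (0:ℝ) 1 ∧ q.1⁻¹ • q.2 ∈ G} = t • G := by
        rw [← preimage_smul_inv₀ ht.1.ne']
        ext y; simp only [mem_preimage, mem_ofPred_eq]; tauto
      rw [this, Measure.addHaar_smul, abs_of_nonneg (by have := ht.1; positivity)]
      simp
    · rw [indicator_of_notMem ht]
      have : Prod.mk t ⁻¹' {q : ℝ × (Fin m → ℝ) | q.1 ∈ Ioo (0:ℝ) 1 ∧ q.1⁻¹ • q.2 ∈ G} = ∅ := by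
        ext y; simp only [mem_preimage, mem_ofPred_eq, mem_empty_iff_false]; tauto
      rw [this, measure_empty]
  simp_rw [h1]
  rw [lintegral_indicator measurableSet_Ioo, lintegral_mul_const _ (by fun_prop)]
  congr 1
  rw [restrict_Ioo_eq_restrict_Ioc, ← ofReal_integral_eq_lintegral_ofReal, ← intervalIntegral.integral_of_le zero_le_one, integral_pow]
  · simp
  · exact (intervalIntegral.intervalIntegrable_pow _).1
  · filter_upwards [ae_restrict_mem measurableSet_Ioc] with t ht
    have := ht.1
    positivity

theorem sphere_coord (E : Type*) [NormedAddCommGroup E] [InnerProductSpace ℝ E] 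
    (e x y f: E) (he : ‖e‖ = 1) (hf : ‖f‖ = 1) (hef : inner ℝ f e = (0:ℝ)) (hx : ‖x‖ = 1) (hy : ‖y‖ = 1)
    (ε : ℝ) (h0 : 0 < ε) (h1 : ε < 1) (hxe : ‖x - e‖ ≤ ε) (hye : ‖y - e‖ ≤ ε) :
    |inner ℝ f x / inner ℝ e x - inner ℝ f y / inner ℝ e y| ≤ (1 + ε) / (1 - ε) ^ 2 * ‖x - y‖ := by
  have key : ∀ z : E, ‖z‖ = 1 → ‖z - e‖ ≤ ε → 1 - ε ≤ inner ℝ e z ∧ inner ℝ e z ≤ (1:ℝ) ∧ |inner ℝ f z| ≤ ε := by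
    intro z hz hze
    refine ⟨?_, ?_, ?_⟩
    · have := abs_real_inner_le_norm e (z - e)
      rw [inner_sub_right, real_inner_self_eq_norm_sq, he, one_mul] at this
      have := (abs_le.1 this).1
      nlinarith
    · have := real_inner_le_norm e z
      rw [he, hz] at this; linarith
    · have := abs_real_inner_le_norm f (z - e)
      rw [inner_sub_right, hef, hf, one_mul, sub_zero] at this
      linarith
  obtain ⟨a1, a2, a3⟩ := key x hx hxe
  obtain ⟨b1, b2, b3⟩ := key y hy hye
  have c1 := abs_real_inner_le_norm f (x - y)
  have c2 := abs_real_inner_le_norm e (x - y)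
  rw [inner_sub_right, hf, one_mul] at c1
  rw [inner_sub_right, he, one_mul] at c2
  generalize (inner ℝ f x : ℝ) = fx at *
  generalize (inner ℝ f y : ℝ) = fy at *
  generalize (inner ℝ e x : ℝ) = ex at *
  generalize (inner ℝ e y : ℝ) = ey at *
  generalize ‖x - y‖ = d at *
  have d0 : 0 ≤ d := (abs_nonneg _).trans c1
  have hex : 0 < ex := by linarith
  have hey : 0 < ey := by linarith
  have h : fx / ex - fy / ey = ((fx - fy) * ey - fy * (ex - ey)) / (ex * ey) := by
    field_simp; ring
  rw [h, abs_div, abs_of_pos (mul_pos hex hey), div_mul_eq_mul_div]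
  have hnum : |(fx - fy) * ey - fy * (ex - ey)| ≤ (1 + ε) * d := by
    calc _ ≤ |(fx - fy) * ey| + |fy * (ex - ey)| := abs_sub _ _
      _ = |fx - fy| * ey + |fy| * |ex - ey| := by rw [abs_mul, abs_mul, abs_of_pos hey]
      _ ≤ d * 1 + ε * d := by gcongr
      _ = _ := by ring
  have : (1 - ε)^2 ≤ ex * ey := by rw [sq]; gcongr
  have : 0 < 1 - ε := by linarith
  gcongr

open scoped Pointwise in
theorem toSphere_small (m : ℕ) (ε : ℝ) (h0 : 0 < ε) (h1 : ε < 1)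
    (s : Set (sphere (0 : EuclideanSpace ℝ (Fin (m+1))) 1)) (hs : MeasurableSet s) 
    (hd : ediam s ≤ ENNReal.ofReal ε) :
    (volume : Measure (EuclideanSpace ℝ (Fin (m+1)))).toSphere s ≤ 
      (ENNReal.ofReal ((1 + ε) / (1 - ε) ^ 2) * ediam s) ^ m := by
  rcases s.eq_empty_or_nonempty with rfl | ⟨e, he⟩
  · simp
  have hdist : ∀ x ∈ s, ∀ y ∈ s, ‖(x:EuclideanSpace ℝ (Fin (m+1))) - y‖ ≤ ε := by
    intro x hx y hy
    have := (edist_le_ediam_of_mem hx hy).trans hd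
    rw [edist_le_ofReal h0.le] at this
    rwa [← dist_eq_norm]
  have hn : ∀ x : sphere (0 : EuclideanSpace ℝ (Fin (m+1))) 1, ‖(x:EuclideanSpace ℝ (Fin (m+1)))‖ = 1 := by
    intro x; simp
  obtain ⟨b, hb⟩ := Orthonormal.exists_orthonormalBasis_extension_of_card_eq (𝕜 := ℝ)
    (E := EuclideanSpace ℝ (Fin (m+1))) (ι := Fin (m+1)) (by simp) 
    (v := fun _ => (e : EuclideanSpace ℝ (Fin (m+1)))) (s := {0}) (by
      constructor
      · intro i; simp
      · intro i j hij; exact absurd (Subsingleton.elim i j) hij)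
  have hb0 : b 0 = e := hb 0 rfl
  let g : sphere (0 : EuclideanSpace ℝ (Fin (m+1))) 1 → (Fin m → ℝ) := 
    fun x i => inner ℝ (b i.succ) (x:EuclideanSpace ℝ (Fin (m+1))) / inner ℝ (b 0) (x:EuclideanSpace ℝ (Fin (m+1)))
  set G := closure (g '' s) with hG
  let Φ : EuclideanSpace ℝ (Fin (m+1)) → ℝ × (Fin m → ℝ) := fun x => 
    MeasurableEquiv.piFinSuccAbove (fun _ => ℝ) 0 (WithLp.ofLp (b.repr x))
  have hΦ : MeasurePreserving Φ volume volume := 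
    (volume_preserving_piFinSuccAbove (fun _ : Fin (m+1) => ℝ) 0).comp 
      ((PiLp.volume_preserving_ofLp (Fin (m+1))).comp b.measurePreserving_repr)
  have hGd : ediam G ≤ ENNReal.ofReal ((1 + ε) / (1 - ε) ^ 2) * ediam s := by
    rw [hG, ediam_closure]
    apply ediam_le
    rintro _ ⟨x, hx, rfl⟩ _ ⟨y, hy, rfl⟩
    refine ((edist_pi_le_iff (d := ENNReal.ofReal ((1 + ε) / (1 - ε) ^ 2) * edist x y)).2 ?_).trans ?_
    · intro i
      rw [edist_dist, Real.dist_eq, edist_dist x y, ← ENNReal.ofReal_mul (by positivity)]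
      apply ENNReal.ofReal_le_ofReal
      rw [Subtype.dist_eq, dist_eq_norm]
      refine sphere_coord _ (b 0) x y (b i.succ) (by simp) (by simp) ?_ (hn x) (hn y) ε h0 h1 ?_ ?_
      · exact b.orthonormal.2 (Fin.succ_ne_zero i)
      · rw [hb0]; exact hdist x hx e he
      · rw [hb0]; exact hdist y hy e he
    · gcongr
      exact edist_le_ediam_of_mem hx hy
  have hsub : Ioo (0:ℝ) 1 • ((↑) '' s : Set (EuclideanSpace ℝ (Fin (m+1)))) ⊆ 
      Φ ⁻¹' {q | q.1 ∈ Ioo (0:ℝ) 1 ∧ q.1⁻¹ • q.2 ∈ G} := by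
    rintro _ ⟨r, hr, _, ⟨x, hx, rfl⟩, rfl⟩
    have hpos : 1 - ε ≤ inner ℝ (b 0) (x : EuclideanSpace ℝ (Fin (m+1))) := by
      rw [hb0]
      have := abs_real_inner_le_norm (e : EuclideanSpace ℝ (Fin (m+1))) (x - e)
      rw [inner_sub_right, real_inner_self_eq_norm_sq, hn e, one_mul] at this
      have := (abs_le.1 this).1
      have := hdist x hx e he
      nlinarith
    have hle : inner ℝ (b 0) (x : EuclideanSpace ℝ (Fin (m+1))) ≤ (1:ℝ) := by
      have := real_inner_le_norm (b 0) (x : EuclideanSpace ℝ (Fin (m+1)))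
      rw [hn x] at this; simpa using this
    have hP1 : (Φ (r • (x : EuclideanSpace ℝ (Fin (m+1))))).1 = r * inner ℝ (b 0) (x : EuclideanSpace ℝ (Fin (m+1))) := by
      simp [Φ, MeasurableEquiv.piFinSuccAbove, b.repr_apply_apply, real_inner_smul_right]
    have hP2 : (Φ (r • (x : EuclideanSpace ℝ (Fin (m+1))))).2 = fun i => r * inner ℝ (b i.succ) (x : EuclideanSpace ℝ (Fin (m+1))) := by
      ext i
      simp [Φ, MeasurableEquiv.piFinSuccAbove, b.repr_apply_apply, Fin.tail]
    have hr0 := hr.1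
    have hr1 := hr.2
    have hp : 0 < inner ℝ (b 0) (x : EuclideanSpace ℝ (Fin (m+1))) := by linarith
    refine ⟨?_, ?_⟩
    · change (Φ (r • (x : EuclideanSpace ℝ (Fin (m+1))))).1 ∈ _
      rw [hP1]
      exact ⟨by positivity, by nlinarith⟩
    · change (Φ (r • (x : EuclideanSpace ℝ (Fin (m+1))))).1⁻¹ • (Φ (r • (x : EuclideanSpace ℝ (Fin (m+1))))).2 ∈ _
      rw [hP1, hP2]
      apply subset_closure
      refine ⟨x, hx, ?_⟩
      ext i
      simp only [g, Pi.smul_apply, smul_eq_mul]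
      field_simp
  rw [Measure.toSphere_apply' _ hs]
  have hGm : MeasurableSet G := isClosed_closure.measurableSet
  have hm : MeasurableSet {q : ℝ × (Fin m → ℝ) | q.1 ∈ Ioo (0:ℝ) 1 ∧ q.1⁻¹ • q.2 ∈ G} := by
    apply MeasurableSet.inter
    · exact measurable_fst measurableSet_Ioo
    · have : Measurable (fun q : ℝ × (Fin m → ℝ) => q.1⁻¹ • q.2) := by fun_prop
      exact this hGm
  calc _ ≤ (Module.finrank ℝ (EuclideanSpace ℝ (Fin (m+1))) : ℝ≥0∞) * 
        (ENNReal.ofReal (1 / (m + 1)) * volume G) := by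
        gcongr
        rw [← vol_cone m G hGm, ← hΦ.measure_preimage hm.nullMeasurableSet]
        exact measure_mono hsub
    _ = volume G := by
        rw [← mul_assoc, finrank_euclideanSpace_fin, ← ENNReal.ofReal_natCast, ← ENNReal.ofReal_mul (by positivity)]
        have : ((m + 1 : ℕ) : ℝ) * (1 / (m + 1)) = 1 := by push_cast; field_simp
        rw [this]; simp
    _ ≤ ediam G ^ m := by simpa using Real.volume_pi_le_diam_pow G
    _ ≤ _ := by gcongr

theorem toSphere_le (m : ℕ) : (volume : Measure (EuclideanSpace ℝ (Fin (m+1)))).toSphere ≤ 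
    Measure.hausdorffMeasure (m : ℝ) := by
  have key : ∀ ε : ℝ, 0 < ε → ε < 1 → ∀ A,
      (volume : Measure (EuclideanSpace ℝ (Fin (m+1)))).toSphere A ≤ 
      ENNReal.ofReal ((1 + ε) / (1 - ε) ^ 2) ^ m * Measure.hausdorffMeasure (m : ℝ) A := by
    intro ε h0 h1 A
    have hK : 0 < (1 + ε) / (1 - ε) ^ 2 := by
      have : 0 < 1 - ε := by linarith
      positivity
    set K := ENNReal.ofReal ((1 + ε) / (1 - ε) ^ 2) ^ m with hKdef
    have hK0 : K ≠ 0 := pow_ne_zero _ (by simpa using hK)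
    have hKt : K ≠ ∞ := ENNReal.pow_ne_top (by simp)
    have : K⁻¹ • (volume : Measure (EuclideanSpace ℝ (Fin (m+1)))).toSphere ≤ 
        Measure.hausdorffMeasure (m : ℝ) := by
      apply Measure.le_hausdorffMeasure _ _ (ENNReal.ofReal ε) (by simpa using h0)
      intro s hs
      rw [Measure.smul_apply, smul_eq_mul, ENNReal.inv_mul_le_iff hK0 hKt]
      calc _ ≤ _ := measure_mono subset_closure
        _ ≤ _ := toSphere_small m ε h0 h1 (closure s) isClosed_closure.measurableSet (by rwa [ediam_closure])
        _ = _ := by rw [ediam_closure, mul_pow, ENNReal.rpow_natCast]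
    have := Measure.le_iff'.1 this A
    rwa [Measure.smul_apply, smul_eq_mul, ENNReal.inv_mul_le_iff hK0 hKt] at this
  refine Measure.le_iff'.2 fun A => ?_
  have ht : Tendsto (fun ε : ℝ => ENNReal.ofReal ((1 + ε) / (1 - ε) ^ 2) ^ m * Measure.hausdorffMeasure (m : ℝ) A)
      (𝓝[>] 0) (𝓝 (1 * Measure.hausdorffMeasure (m : ℝ) A)) := by
    refine ENNReal.Tendsto.mul_const ?_ (Or.inl one_ne_zero)
    have h : ContinuousAt (fun ε : ℝ => (1 + ε) / (1 - ε) ^ 2) 0 := by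
      apply ContinuousAt.div <;> first | fun_prop | simp
    have h2 := ((ENNReal.continuous_pow m).tendsto _).comp ((ENNReal.continuous_ofReal.tendsto _).comp h.tendsto)
    have h3 := h2.mono_left (nhdsWithin_le_nhds (s := Ioi 0))
    simpa [Function.comp_def] using h3
  rw [one_mul] at ht
  refine ge_of_tendsto ht ?_
  filter_upwards [Ioo_mem_nhdsGT (zero_lt_one' ℝ)] with ε hε
  exact key ε hε.1 hε.2 A

theorem sphere_lintegral_le (m : ℕ) (R : ℝ) (hR : 0 < R) (F : EuclideanSpace ℝ (Fin (m+1)) → ℝ≥0∞)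
    (hF : Measurable F) :
    ENNReal.ofReal (R ^ m) * ∫⁻ ω, F (R • (ω : EuclideanSpace ℝ (Fin (m+1)))) 
      ∂((volume : Measure (EuclideanSpace ℝ (Fin (m+1)))).toSphere) ≤ 
    ∫⁻ y in sphere (0 : EuclideanSpace ℝ (Fin (m+1))) R, F y ∂(Measure.hausdorffMeasure (m : ℝ)) := by
  set g : sphere (0 : EuclideanSpace ℝ (Fin (m+1))) 1 → EuclideanSpace ℝ (Fin (m+1)) := 
    fun ω => R • (ω : EuclideanSpace ℝ (Fin (m+1))) with hg
  have hgm : Measurable g := by fun_prop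
  rw [← lintegral_map (f := F) (g := g) hF hgm, ← smul_eq_mul, ← lintegral_smul_measure]
  apply lintegral_mono' _ le_rfl
  refine Measure.le_iff.2 fun A hA => ?_
  rw [Measure.smul_apply, smul_eq_mul, Measure.map_apply hgm hA, Measure.restrict_apply hA]
  have hal : AntilipschitzWith (Real.toNNReal R⁻¹) g := by
    apply AntilipschitzWith.of_le_mul_dist
    intro x y
    rw [hg, dist_smul₀, Real.coe_toNNReal _ (by positivity), Subtype.dist_eq, Real.norm_of_nonneg hR.le]
    field_simp
    rfl
  have hpre : g ⁻¹' A = g ⁻¹' (A ∩ sphere 0 R) := by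
    ext ω
    simp [hg, norm_smul, abs_of_pos hR]
  have h1 := hal.hausdorffMeasure_preimage_le (Nat.cast_nonneg m) (A ∩ sphere 0 R)
  rw [← hpre] at h1
  have h2 := (Measure.le_iff'.1 (toSphere_le m) (g ⁻¹' A)).trans h1
  calc _ ≤ _ := mul_le_mul_right h2 _
    _ = _ := by
      rw [← mul_assoc, ENNReal.rpow_natCast]
      change ENNReal.ofReal _ * (ENNReal.ofReal _) ^ m * _ = _
      rw [← ENNReal.ofReal_pow (by positivity), ← ENNReal.ofReal_mul (by positivity), ← mul_pow, mul_inv_cancel₀ hR.ne']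
      simp

theorem polar (m : ℕ) (R : ℝ) (hR : 0 < R) (h : EuclideanSpace ℝ (Fin (m+1)) → ℝ≥0∞)
    (hh : Measurable h) :
    ∫⁻ x in {x : EuclideanSpace ℝ (Fin (m+1)) | R < ‖x‖}, h x = 
    ∫⁻ ω, (∫⁻ r in Ioi R, ENNReal.ofReal (r ^ m) * h (r • (ω : EuclideanSpace ℝ (Fin (m+1))))) 
      ∂((volume : Measure (EuclideanSpace ℝ (Fin (m+1)))).toSphere) := by
  have hS : MeasurableSet {x : EuclideanSpace ℝ (Fin (m+1)) | R < ‖x‖} := 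
    (isOpen_lt continuous_const continuous_norm).measurableSet
  rw [← lintegral_indicator hS]
  set k := {x : EuclideanSpace ℝ (Fin (m+1)) | R < ‖x‖}.indicator h with hk
  have hkm : Measurable k := hh.indicator hS
  have e1 : ∫⁻ x, k x = ∫⁻ x : ({0}ᶜ : Set (EuclideanSpace ℝ (Fin (m+1)))), k x ∂(volume.comap Subtype.val) := by
    rw [lintegral_subtype_comap (MeasurableSet.singleton _).compl, restrict_compl_singleton]
  have mp := (volume : Measure (EuclideanSpace ℝ (Fin (m+1)))).measurePreserving_homeomorphUnitSphereProd
  have e2 : ∫⁻ x : ({0}ᶜ : Set (EuclideanSpace ℝ (Fin (m+1)))), k x ∂(volume.comap Subtype.val) = 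
     ∫⁻ q : sphere (0 : EuclideanSpace ℝ (Fin (m+1))) 1 × Ioi (0:ℝ), k (q.2.1 • q.1.1) 
      ∂((volume : Measure (EuclideanSpace ℝ (Fin (m+1)))).toSphere.prod (Measure.volumeIoiPow m)) := by
    have hd : Module.finrank ℝ (EuclideanSpace ℝ (Fin (m+1))) - 1 = m := by simp
    rw [hd] at mp
    rw [← mp.lintegral_comp (by fun_prop)]
    refine lintegral_congr fun x => ?_
    congr 1
    have : ‖(x:EuclideanSpace ℝ (Fin (m+1)))‖ ≠ 0 := norm_ne_zero_iff.2 x.2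
    simp [smul_smul, this]
  rw [e1, e2, lintegral_prod _ (by fun_prop)]
  refine lintegral_congr fun ω => ?_
  have hn : ‖(ω:EuclideanSpace ℝ (Fin (m+1)))‖ = 1 := by simp
  rw [Measure.volumeIoiPow, lintegral_withDensity_eq_lintegral_mul _ (by fun_prop) (by fun_prop)]
  have := lintegral_subtype_comap (μ := (volume : Measure ℝ)) (measurableSet_Ioi (a := (0:ℝ))) 
    (fun r : ℝ => ENNReal.ofReal (r ^ m) * k (r • (ω : EuclideanSpace ℝ (Fin (m+1)))))
  simp only [Pi.mul_apply]
  rw [this, ← lintegral_indicator measurableSet_Ioi, ← lintegral_indicator measurableSet_Ioi]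
  refine lintegral_congr fun r => ?_
  by_cases hr : R < r
  · have hr0 := hR.trans hr
    rw [indicator_of_mem (mem_Ioi.2 hr), indicator_of_mem (mem_Ioi.2 hr0), hk, indicator_of_mem]
    simpa [norm_smul, abs_of_pos hr0] using hr
  · rw [indicator_of_notMem (s := Ioi R) (by simpa using hr)]
    by_cases hr0 : 0 < r
    · rw [indicator_of_mem (mem_Ioi.2 hr0), hk, indicator_of_notMem, mul_zero]
      simpa [norm_smul, abs_of_pos hr0] using hr
    · rw [indicator_of_notMem (by simpa using hr0)]

theorem young_aux (p D X : ℝ) (hp : 1 < p) (hD : 0 ≤ D) (hX : 0 ≤ X) :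
    p * (X ^ (p - 1) * D) ≤ D ^ p + (p - 1) * X ^ p := by
  have hc : p.HolderConjugate (p / (p - 1)) := Real.HolderConjugate.conjExponent hp
  have h := Real.young_inequality_of_nonneg hD (Real.rpow_nonneg hX (p - 1)) hc
  have hp1 : p - 1 ≠ 0 := by linarith
  rw [← Real.rpow_mul hX, mul_div_cancel₀ _ hp1] at h
  have := mul_le_mul_of_nonneg_left h (by linarith : 0 ≤ p)
  calc _ = p * (D * X ^ (p - 1)) := by ring
    _ ≤ _ := this
    _ = _ := by field_simp

theorem pointwise (m : ℕ) (p a r y y' D : ℝ) (hp : (m + 1 : ℝ) < p) (ha0 : 0 < a)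
    (ha : p * a ≤ p - (m + 1)) (hr : 0 < r) (hD : |y'| ≤ D) :
    a ^ (p - 1) * ((p * |y| ^ (p - 2) * y * y') * r ^ (m + 1 - p) + 
      |y| ^ p * ((m + 1 - p) * r ^ (m + 1 - p - 1))) ≤ 
    r ^ m * D ^ p - a ^ p * (r ^ m * (|y| ^ p / r ^ p)) := by
  have hm : (0:ℝ) ≤ m := Nat.cast_nonneg m
  have hp1 : 1 < p := by linarith
  have hD0 : 0 ≤ D := (abs_nonneg _).trans hD
  have hA : |y| ^ (p - 2) * y * y' ≤ |y| ^ (p - 1) * D := by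
    rcases eq_or_ne y 0 with rfl | hy
    · simp only [mul_zero, zero_mul]; positivity
    · have h0 : 0 < |y| := abs_pos.2 hy
      have : |y| ^ (p - 1) = |y| ^ (p - 2) * |y| := by
        rw [← Real.rpow_add_one h0.ne']; congr 1; ring
      rw [this, mul_assoc, mul_assoc]
      refine mul_le_mul_of_nonneg_left ?_ (by positivity)
      calc _ ≤ |y * y'| := le_abs_self _
        _ = |y| * |y'| := abs_mul _ _
        _ ≤ _ := by gcongr
  have e1 : r ^ (m + 1 - p : ℝ) = r ^ m / r ^ (p - 1) := by
    rw [← Real.rpow_natCast, ← Real.rpow_sub hr]; congr 1; ring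
  have e2 : r ^ (m + 1 - p - 1 : ℝ) = r ^ m / r ^ p := by
    rw [← Real.rpow_natCast, ← Real.rpow_sub hr]; congr 1; ring
  have e3 : a ^ p = a ^ (p - 1) * a := by
    rw [← Real.rpow_add_one ha0.ne']; congr 1; ring
  have hy := young_aux p D (a * |y| / r) hp1 hD0 (by positivity)
  rw [Real.div_rpow (by positivity) hr.le, Real.div_rpow (by positivity) hr.le, 
    Real.mul_rpow ha0.le (abs_nonneg _), Real.mul_rpow ha0.le (abs_nonneg _)] at hy
  rw [e1, e2]
  have hrm : 0 < r ^ m := by positivity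
  have hQ : 0 ≤ |y| ^ p / r ^ p := by positivity
  have ha1 : 0 < a ^ (p - 1) := by positivity
  calc _ = r ^ m * (p * a ^ (p - 1) / r ^ (p - 1) * (|y| ^ (p - 2) * y * y') - (p - (m + 1)) * a ^ (p - 1) * (|y| ^ p / r ^ p)) := by ring
    _ ≤ r ^ m * (p * a ^ (p - 1) / r ^ (p - 1) * (|y| ^ (p - 1) * D) - (p * a) * a ^ (p - 1) * (|y| ^ p / r ^ p)) := by
        gcongr
    _ = r ^ m * (p * (a ^ (p - 1) * |y| ^ (p - 1) / r ^ (p - 1) * D) - p * a ^ p * (|y| ^ p / r ^ p)) := by rw [e3]; ring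
    _ ≤ r ^ m * (D ^ p + (p - 1) * (a ^ p * |y| ^ p / r ^ p) - p * a ^ p * (|y| ^ p / r ^ p)) := by
        gcongr
    _ = _ := by ring

theorem one_dim (m : ℕ) (p R σ a : ℝ) (hp : (m + 1 : ℝ) < p) (hR : 0 < R) (hσ : 0 < σ) (ha0 : 0 < a)
    (ha : p * a ≤ p - (m + 1)) (haσ : a ^ (p - 1) ≤ σ * R ^ (p - 1)) (f f' D : ℝ → ℝ) 
    (hf : ContinuousOn f (Ici R)) (hDm : Measurable D) 
    (hder : ∀ r, R < r → HasDerivAt f (f' r) r) (hle : ∀ r, R < r → |f' r| ≤ D r) :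
    ENNReal.ofReal (a ^ p) * ∫⁻ r in Ioi R, ENNReal.ofReal (r ^ m) * ENNReal.ofReal (|f r| ^ p / r ^ p) ≤ 
    (∫⁻ r in Ioi R, ENNReal.ofReal (r ^ m) * ENNReal.ofReal (D r ^ p)) + 
      ENNReal.ofReal σ * (ENNReal.ofReal (R ^ m) * ENNReal.ofReal (|f R| ^ p)) := by
  have hm : (0:ℝ) ≤ m := Nat.cast_nonneg m
  have hp1 : 1 < p := by linarith
  by_cases htop : (∫⁻ r in Ioi R, ENNReal.ofReal (r ^ m) * ENNReal.ofReal (D r ^ p)) = ∞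
  · rw [htop]; simp
  set w : ℝ → ℝ := fun r => r ^ m * D r ^ p with hw
  set v : ℝ → ℝ := fun r => r ^ m * (|f r| ^ p / r ^ p) with hv
  have hww : ∀ r ∈ Ioi R, ENNReal.ofReal (r ^ m) * ENNReal.ofReal (D r ^ p) = ENNReal.ofReal (w r) := by
    intro r hr
    have : 0 < r := hR.trans hr
    rw [hw, ENNReal.ofReal_mul (by positivity)]
  have hvv : ∀ r ∈ Ioi R, ENNReal.ofReal (r ^ m) * ENNReal.ofReal (|f r| ^ p / r ^ p) = ENNReal.ofReal (v r) := by
    intro r hr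
    have : 0 < r := hR.trans hr
    rw [hv, ENNReal.ofReal_mul (by positivity)]
  rw [setLIntegral_congr_fun measurableSet_Ioi hww] at htop ⊢
  rw [setLIntegral_congr_fun measurableSet_Ioi hvv]
  have hw0 : ∀ r ∈ Ioi R, 0 ≤ w r := by
    intro r hr
    have : 0 < r := hR.trans hr
    have : 0 ≤ D r := (abs_nonneg _).trans (hle r hr)
    positivity
  have hwi : IntegrableOn w (Ioi R) := by
    refine ⟨by rw [hw]; exact (by fun_prop : Measurable fun r => r ^ m * D r ^ p).aestronglyMeasurable, ?_⟩
    rw [hasFiniteIntegral_iff_ofReal]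
    · exact lt_top_iff_ne_top.2 htop
    · filter_upwards [ae_restrict_mem measurableSet_Ioi] with r hr using hw0 r hr
  have hvc : ContinuousOn v (Ici R) := by
    rw [hv]
    refine (continuousOn_id.pow m).mul (ContinuousOn.div ?_ ?_ ?_)
    · exact hf.abs.rpow_const fun x _ => Or.inr (by linarith)
    · exact continuousOn_id.rpow_const fun x _ => Or.inr (by linarith)
    · intro x hx
      have : 0 < x := hR.trans_le hx
      positivity
  set G : ℝ → ℝ := fun r => a ^ (p - 1) * (|f r| ^ p * r ^ (m + 1 - p : ℝ)) with hG
  have hGc : ContinuousOn G (Ici R) := by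
    rw [hG]
    refine continuousOn_const.mul (ContinuousOn.mul ?_ ?_)
    · exact hf.abs.rpow_const fun x _ => Or.inr (by linarith)
    · exact continuousOn_id.rpow_const fun x hx => Or.inl (hR.trans_le hx).ne'
  have hGR : G R ≤ σ * (R ^ m * |f R| ^ p) := by
    have e1 : R ^ (m + 1 - p : ℝ) = R ^ m / R ^ (p - 1) := by
      rw [← Real.rpow_natCast, ← Real.rpow_sub hR]; congr 1; ring
    calc G R ≤ σ * R ^ (p - 1) * (|f R| ^ p * R ^ (m + 1 - p : ℝ)) := by
          simp only [hG]; gcongr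
      _ = _ := by
          rw [e1]
          have : R ^ (p - 1) ≠ 0 := by positivity
          field_simp
  have key : ∀ T, R < T → ENNReal.ofReal (a ^ p) * ∫⁻ r in Ioc R T, ENNReal.ofReal (v r) ≤ 
      (∫⁻ r in Ioi R, ENNReal.ofReal (w r)) + 
      ENNReal.ofReal σ * (ENNReal.ofReal (R ^ m) * ENNReal.ofReal (|f R| ^ p)) := by
    intro T hT
    have hwI : IntegrableOn w (Icc R T) := by
      rw [integrableOn_Icc_iff_integrableOn_Ioc]
      exact hwi.mono_set Ioc_subset_Ioi_self
    have hvI : IntegrableOn v (Icc R T) := (hvc.mono Icc_subset_Ici_self).integrableOn_Icc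
    have h := intervalIntegral.sub_le_integral_of_hasDeriv_right_of_le hT.le (hGc.mono Icc_subset_Ici_self)
      (g' := fun r => a ^ (p - 1) * ((p * |f r| ^ (p - 2) * f r * f' r) * r ^ (m + 1 - p : ℝ) + 
      |f r| ^ p * ((m + 1 - p) * r ^ (m + 1 - p - 1 : ℝ)))) (φ := fun r => w r - a ^ p * v r)
      (by
        intro x hx
        have hx0 : 0 < x := hR.trans hx.1
        have h1 := (hasDerivAt_abs_rpow (f x) hp1).comp x (hder x hx.1)
        have h2 := Real.hasDerivAt_rpow_const (x := x) (p := (m + 1 - p : ℝ)) (Or.inl hx0.ne')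
        exact ((h1.mul h2).const_mul _).hasDerivWithinAt) 
      (hwI.sub (hvI.const_mul _))
      (by
        intro x hx
        exact pointwise m p a x (f x) (f' x) (D x) hp ha0 ha (hR.trans hx.1) (hle x hx.1))
    have hG0 : 0 ≤ G T := by
      have : 0 < T := hR.trans hT
      positivity
    have hwo := hwI.mono_set Ioc_subset_Icc_self
    have hvo := hvI.mono_set Ioc_subset_Icc_self
    rw [intervalIntegral.integral_of_le hT.le, integral_sub hwo (hvo.const_mul _), 
      integral_const_mul] at h
    rw [← ofReal_integral_eq_lintegral_ofReal hvo, ← ENNReal.ofReal_mul (by positivity)]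
    · calc _ ≤ ENNReal.ofReal ((∫ r in Ioc R T, w r) + σ * (R ^ m * |f R| ^ p)) := by
            apply ENNReal.ofReal_le_ofReal; linarith
        _ ≤ ENNReal.ofReal (∫ r in Ioc R T, w r) + ENNReal.ofReal (σ * (R ^ m * |f R| ^ p)) := ENNReal.ofReal_add_le
        _ ≤ _ := by
            rw [ENNReal.ofReal_mul hσ.le, ENNReal.ofReal_mul (by positivity), ofReal_integral_eq_lintegral_ofReal hwo]
            · gcongr; exact Ioc_subset_Ioi_self
            · filter_upwards [ae_restrict_mem measurableSet_Ioc] with r hr using hw0 r hr.1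
    · filter_upwards [ae_restrict_mem measurableSet_Ioc] with r hr
      have : 0 < r := hR.trans hr.1
      simp only [hv]; positivity
  have hU : Ioi R = ⋃ k : ℕ, Ioc R (R + (k + 1)) := by
    ext x
    simp only [mem_Ioi, mem_iUnion, mem_Ioc]
    constructor
    · intro hx
      obtain ⟨k, hk⟩ := exists_nat_ge (x - R)
      exact ⟨k, hx, by linarith⟩
    · rintro ⟨k, hx, _⟩; exact hx
  have hdir : Directed (· ⊆ ·) (fun k : ℕ => Ioc R (R + ((k:ℝ) + 1))) := by
    apply Monotone.directed_le
    intro i j hij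
    apply Ioc_subset_Ioc_right
    have : (i:ℝ) ≤ j := by exact_mod_cast hij
    linarith
  have : ∫⁻ r in Ioi R, ENNReal.ofReal (v r) = ⨆ k : ℕ, ∫⁻ r in Ioc R (R + ((k:ℝ) + 1)), ENNReal.ofReal (v r) := by
    rw [hU]; exact setLIntegral_iUnion_of_directed _ hdir
  rw [this, ENNReal.mul_iSup]
  refine iSup_le fun k => key _ ?_
  have : (0:ℝ) ≤ k := Nat.cast_nonneg k
  linarith

/-- **Theorem 6.2 (Robin–Hardy inequality on the complement of a ball, `p > n`).**
For `p > n ≥ 1`, `R > 0`, `σ > 0` and every `u ∈ W^{1,p}(B_R^c)`: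
`∫_{B_R^c} |∇u|^p + σ ∫_{∂B_R} |u|^p dν ≥ C(σ,R) ∫_{B_R^c} |u|^p/|x|^p`,
with `C(σ,R) = min{((p-n)/p)^p, R^p σ^{p/(p-1)}}`. -/
theorem exterior_hardy_robin (n : ℕ) (hn : 1 ≤ n) (p R σ : ℝ) (hpn : (n : ℝ) < p)
    (hR : 0 < R) (hσ : 0 < σ)
    (u : EuclideanSpace ℝ (Fin n) → ℝ)
    (hu : MemW1p p {x : EuclideanSpace ℝ (Fin n) | R < ‖x‖} u) :
    (∫⁻ x in {x : EuclideanSpace ℝ (Fin n) | R < ‖x‖},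
        ENNReal.ofReal (‖fderiv ℝ u x‖ ^ p)) +
      ENNReal.ofReal σ *
        (∫⁻ y in Metric.sphere (0 : EuclideanSpace ℝ (Fin n)) R,
          ENNReal.ofReal (|u y| ^ p) ∂(Measure.hausdorffMeasure ((n : ℝ) - 1))) ≥
      ENNReal.ofReal (min (((p - (n : ℝ)) / p) ^ p) (R ^ p * σ ^ (p / (p - 1)))) *
        ∫⁻ x in {x : EuclideanSpace ℝ (Fin n) | R < ‖x‖},
          ENNReal.ofReal (|u x| ^ p / ‖x‖ ^ p) := by
  obtain ⟨m, rfl⟩ : ∃ m, n = m + 1 := ⟨n - 1, by omega⟩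
  obtain ⟨huc, hud, -, -⟩ := hu
  have hm : (0:ℝ) ≤ m := Nat.cast_nonneg m
  have hd : ((m + 1 : ℕ) : ℝ) - 1 = m := by push_cast; ring
  rw [hd]
  push_cast at hpn ⊢
  have hp1 : 1 < p := by linarith
  have hp0 : 0 < p := by linarith
  set b1 := (p - ((m:ℝ) + 1)) / p with hb1
  set b2 := R * σ ^ (1 / (p - 1)) with hb2
  have hb1p : 0 < b1 := div_pos (by linarith) hp0
  have hb2p : 0 < b2 := by positivity
  have hb2e : R ^ p * σ ^ (p / (p - 1)) = b2 ^ p := by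
    rw [hb2, Real.mul_rpow hR.le (by positivity), ← Real.rpow_mul hσ.le]
    congr 2; ring
  rw [hb2e]
  obtain ⟨a, ha0, ha1, ha2, haC⟩ : ∃ a, 0 < a ∧ a ≤ b1 ∧ a ≤ b2 ∧ min (b1 ^ p) (b2 ^ p) ≤ a ^ p := by
    rcases le_total b1 b2 with h | h
    · exact ⟨b1, hb1p, le_rfl, h, min_le_left _ _⟩
    · exact ⟨b2, hb2p, h, le_rfl, min_le_right _ _⟩
  have hap : p * a ≤ p - (m + 1) := by
    rw [hb1, le_div_iff₀ hp0] at ha1; linarith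
  have haσ : a ^ (p - 1) ≤ σ * R ^ (p - 1) := by
    calc a ^ (p - 1) ≤ b2 ^ (p - 1) := Real.rpow_le_rpow ha0.le ha2 (by linarith)
      _ = _ := by
        rw [hb2, Real.mul_rpow hR.le (by positivity), ← Real.rpow_mul hσ.le, 
          one_div_mul_cancel (by linarith), Real.rpow_one, mul_comm]
  have hcl : closure {x : EuclideanSpace ℝ (Fin (m+1)) | R < ‖x‖} = {x | R ≤ ‖x‖} := by
    apply Subset.antisymm
    · exact closure_minimal (fun x (hx : R < ‖x‖) => (hx.le : R ≤ ‖x‖)) (isClosed_le continuous_const continuous_norm)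
    · intro x hx
      have hx' : R ≤ ‖x‖ := hx
      have hc : Tendsto (fun t : ℝ => t • x) (𝓝[>] 1) (𝓝 x) := by
        have h : Continuous (fun t : ℝ => t • x) := by fun_prop
        have := (h.tendsto 1).mono_left (nhdsWithin_le_nhds (s := Ioi 1))
        simpa using this
      refine mem_closure_of_tendsto hc ?_
      filter_upwards [self_mem_nhdsWithin] with t ht
      have ht' : 1 < t := ht
      change R < ‖t • x‖
      rw [norm_smul, Real.norm_of_nonneg (by linarith)]
      nlinarith
  rw [hcl] at huc
  have hcm : MeasurableSet {x : EuclideanSpace ℝ (Fin (m+1)) | R ≤ ‖x‖} :=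
    (isClosed_le continuous_const continuous_norm).measurableSet
  have hom : MeasurableSet {x : EuclideanSpace ℝ (Fin (m+1)) | R < ‖x‖} := 
    (isOpen_lt continuous_const continuous_norm).measurableSet
  classical
  set w : EuclideanSpace ℝ (Fin (m+1)) → ℝ := 
    Set.piecewise {x : EuclideanSpace ℝ (Fin (m+1)) | R ≤ ‖x‖} u (fun _ => 0) with hw
  have hwm : Measurable w := huc.measurable_piecewise continuousOn_const hcm
  have hwu : ∀ x : EuclideanSpace ℝ (Fin (m+1)), R ≤ ‖x‖ → w x = u x := fun x hx => 
    Set.piecewise_eq_of_mem _ _ _ hx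
  have hDm : Measurable (fderiv ℝ u) := measurable_fderiv ℝ u
  have r1 : ∫⁻ x in {x : EuclideanSpace ℝ (Fin (m+1)) | R < ‖x‖}, ENNReal.ofReal (|u x| ^ p / ‖x‖ ^ p) =
      ∫⁻ x in {x : EuclideanSpace ℝ (Fin (m+1)) | R < ‖x‖}, ENNReal.ofReal (|w x| ^ p / ‖x‖ ^ p) := by
    refine setLIntegral_congr_fun hom fun x hx => ?_
    have hx' : R < ‖x‖ := hx
    simp only [hwu x hx'.le]
  have r2 : ∫⁻ y in Metric.sphere (0 : EuclideanSpace ℝ (Fin (m+1))) R,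
          ENNReal.ofReal (|u y| ^ p) ∂(Measure.hausdorffMeasure (m : ℝ)) = 
      ∫⁻ y in Metric.sphere (0 : EuclideanSpace ℝ (Fin (m+1))) R,
          ENNReal.ofReal (|w y| ^ p) ∂(Measure.hausdorffMeasure (m : ℝ)) := by
    refine setLIntegral_congr_fun isClosed_sphere.measurableSet fun x hx => ?_
    have hx' : ‖x‖ = R := by simpa using hx
    simp only [hwu x hx'.ge]
  rw [ge_iff_le, r1, r2]
  have hwp : Measurable fun x => ENNReal.ofReal (|w x| ^ p) := by fun_prop
  have hwq : Measurable fun x => ENNReal.ofReal (|w x| ^ p / ‖x‖ ^ p) := by fun_prop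
  have hDp : Measurable fun x => ENNReal.ofReal (‖fderiv ℝ u x‖ ^ p) := by fun_prop
  have hsph := sphere_lintegral_le m R hR _ hwp
  refine le_trans ?_ (add_le_add_right (mul_le_mul_right hsph _) _)
  refine (mul_le_mul_left (ENNReal.ofReal_le_ofReal haC) _).trans ?_
  rw [polar m R hR _ hwq, polar m R hR _ hDp]
  have hg : Measurable fun ω : sphere (0 : EuclideanSpace ℝ (Fin (m+1))) 1 => 
      ENNReal.ofReal (|w (R • (ω : EuclideanSpace ℝ (Fin (m+1))))| ^ p) := by fun_prop
  rw [← lintegral_const_mul' _ _ ENNReal.ofReal_ne_top, ← lintegral_const_mul' _ _ ENNReal.ofReal_ne_top,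
    ← lintegral_const_mul' _ _ ENNReal.ofReal_ne_top, ← lintegral_add_right _ (by fun_prop)]
  refine lintegral_mono fun ω => ?_
  have hω : ‖(ω : EuclideanSpace ℝ (Fin (m+1)))‖ = 1 := by simp
  have hnr : ∀ r : ℝ, 0 < r → ‖r • (ω : EuclideanSpace ℝ (Fin (m+1)))‖ = r := by
    intro r hr; rw [norm_smul, hω, Real.norm_of_nonneg hr.le, mul_one]
  have := one_dim m p R σ a hpn hR hσ ha0 hap haσ (fun r => w (r • (ω : EuclideanSpace ℝ (Fin (m+1)))))
    (fun r => fderiv ℝ u (r • (ω : EuclideanSpace ℝ (Fin (m+1)))) ω) 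
    (fun r => ‖fderiv ℝ u (r • (ω : EuclideanSpace ℝ (Fin (m+1))))‖) ?_ (by fun_prop) ?_ ?_
  · refine le_trans (le_of_eq ?_) this
    congr 1
    refine setLIntegral_congr_fun measurableSet_Ioi fun r hr => ?_
    simp only [hnr r (hR.trans hr)]
  · have hcomp : ContinuousOn (fun r : ℝ => u (r • (ω : EuclideanSpace ℝ (Fin (m+1))))) (Ici R) := by
      refine huc.comp (by fun_prop) ?_
      intro r hr
      have hr' : R ≤ r := hr
      change R ≤ ‖r • (ω : EuclideanSpace ℝ (Fin (m+1)))‖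
      rwa [hnr r (hR.trans_le hr')]
    refine hcomp.congr fun r hr => ?_
    have hr' : R ≤ r := hr
    exact hwu _ (by rwa [hnr r (hR.trans_le hr')])
  · intro r hr
    have hdu := (hud (r • (ω : EuclideanSpace ℝ (Fin (m+1)))) (by
      change R < ‖r • (ω : EuclideanSpace ℝ (Fin (m+1)))‖
      rwa [hnr r (hR.trans hr)])).hasFDerivAt
    have hl : HasDerivAt (fun r : ℝ => r • (ω : EuclideanSpace ℝ (Fin (m+1)))) (ω : EuclideanSpace ℝ (Fin (m+1))) r := by
      simpa using (hasDerivAt_id r).smul_const (ω : EuclideanSpace ℝ (Fin (m+1)))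
    refine (hdu.comp_hasDerivAt r hl).congr_of_eventuallyEq ?_
    filter_upwards [Ioi_mem_nhds hr] with t ht
    have ht' : R < t := ht
    exact hwu _ (by rw [hnr t (hR.trans ht')]; exact ht'.le)
  · intro r hr
    have := (fderiv ℝ u (r • (ω : EuclideanSpace ℝ (Fin (m+1))))).le_opNorm (ω : EuclideanSpace ℝ (Fin (m+1)))
    rwa [hω, mul_one, Real.norm_eq_abs] at this

end RobinHardy
end
end

section
/- Let p = n ≥ 2, R > 0 and σ > 0, and let B_R^c = {x ∈ ℝ^n : |x| > R}. Then there is no constant C > 0 such that ∫_{B_R^c} |∇u(x)|^n dx + σ ∫_{∂B_R} |u|^n dν ≥ C ∫_{B_R^c} |u(x)|^n/|x|^n dx holds for all u ∈ W^{1,n}(B_R^c). In fact, for the test functions u_k(x) = max{0, 1 − log(|x|/R)/log k}, k ∈ ℕ, k ≥ 2, the quotient ( ∫_{B_R^c} |∇u_k|^n dx + σ ∫_{∂B_R} |u_k|^n dν ) / ∫_{B_R^c} |u_k|^n/|x|^n dx tends to 0 as k → ∞. -/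
open MeasureTheory Metric Set Filter Bornology
open scoped ENNReal Topology

noncomputable section

namespace RobinHardy

/-- The test functions `u_k(x) = max{0, 1 - log(|x|/R)/log k}`. -/
def uTest (n : ℕ) (R : ℝ) (k : ℕ) (x : EuclideanSpace ℝ (Fin n)) : ℝ :=
  max 0 (1 - Real.log (‖x‖ / R) / Real.log k)


open Module in
theorem aux_half {n : ℕ} (hn : 2 ≤ n) (R : ℝ) (v : EuclideanSpace ℝ (Fin n)) (hv : ‖v‖ = 1) :
    (Measure.hausdorffMeasure ((n : ℝ) - 1) : Measure (EuclideanSpace ℝ (Fin n)))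
      ((fun x => R • x) '' {x | ‖x‖ = 1 ∧ inner ℝ v x ≤ 0}) < ∞ := by
  set W := (ℝ ∙ v)ᗮ with hW
  have hfr : (finrank ℝ W : ℝ) = (n : ℝ) - 1 := by
    have hv0 : v ≠ 0 := by intro h; simp [h] at hv
    have : Fact (finrank ℝ (EuclideanSpace ℝ (Fin n)) = (n - 1) + 1) := ⟨by simp; omega⟩
    rw [hW, Submodule.finrank_orthogonal_span_singleton (n := n - 1) hv0]
    rw [Nat.cast_sub (by omega)]; simp
  have hsmooth : ContDiff ℝ 1 (fun w : W => R • stereoInvFunAux v (w : EuclideanSpace ℝ (Fin n))) :=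
    contDiff_const.fun_smul (contDiff_stereoInvFunAux.comp W.subtypeL.contDiff)
  have hcomp : IsCompact (closedBall (0 : W) 2) := isCompact_closedBall _ _
  obtain ⟨K, hK⟩ := LocallyLipschitzOn.exists_lipschitzOnWith_of_compact hcomp
    (hsmooth.locallyLipschitz.locallyLipschitzOn (s := closedBall (0 : W) 2))
  have h1 := hK.hausdorffMeasure_image_le (d := finrank ℝ W) (by positivity)
  have h2 : (Measure.hausdorffMeasure (finrank ℝ W) : Measure W) (closedBall (0 : W) 2) < ∞ :=
    hcomp.measure_lt_top
  rw [← hfr]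
  refine lt_of_le_of_lt (measure_mono ?_) (h1.trans_lt (ENNReal.mul_lt_top ?_ h2))
  · rintro _ ⟨x, ⟨hx, hi⟩, rfl⟩
    refine ⟨stereoToFun v x, ?_, ?_⟩
    · simp only [mem_closedBall, dist_zero_right, stereoToFun_apply, norm_smul, innerSL_apply_apply]
      have ha : ‖(ℝ ∙ v)ᗮ.orthogonalProjectionOnto x‖ ≤ 1 := by
        rw [← hx]; exact Submodule.norm_orthogonalProjectionOnto_apply_le _ _
      have hb : ‖(2 / ((1 : ℝ) - inner ℝ v x))‖ ≤ 2 := by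
        rw [Real.norm_eq_abs, abs_of_nonneg (div_nonneg (by norm_num) (by linarith)),
          div_le_iff₀ (by linarith)]
        linarith
      nlinarith [norm_nonneg ((ℝ ∙ v)ᗮ.orthogonalProjectionOnto x)]
    · have hne : x ≠ v := by
        rintro rfl
        rw [real_inner_self_eq_norm_sq, hv] at hi; norm_num at hi
      have := stereo_left_inv hv (x := ⟨x, by simpa using hx⟩) hne
      have := congrArg Subtype.val this
      simp only [stereoInvFun_apply] at this
      simp only
      exact congrArg (fun z => R • z) this
  · exact ENNReal.rpow_lt_top_of_nonneg (by positivity) (by simp)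

theorem sphere_finite {n : ℕ} (hn : 2 ≤ n) (R : ℝ) (hR : 0 < R) :
    (Measure.hausdorffMeasure ((n : ℝ) - 1) : Measure (EuclideanSpace ℝ (Fin n)))
      (sphere 0 R) < ∞ := by
  have : Nonempty (Fin n) := ⟨⟨0, by omega⟩⟩
  obtain ⟨v, hv⟩ := exists_norm_eq (EuclideanSpace ℝ (Fin n)) (zero_le_one (α := ℝ))
  refine lt_of_le_of_lt ((measure_mono ?_).trans (measure_union_le _ _))
    (ENNReal.add_lt_top.2 ⟨aux_half hn R v hv, aux_half hn R (-v) (by simpa using hv)⟩)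
  intro x hx
  have hx : ‖x‖ = R := by simpa using hx
  have e : R • (R⁻¹ • x) = x := by rw [smul_smul, mul_inv_cancel₀ hR.ne', one_smul]
  have e2 : ‖R⁻¹ • x‖ = 1 := by
    rw [norm_smul, hx, Real.norm_eq_abs, abs_of_pos (inv_pos.2 hR), inv_mul_cancel₀ hR.ne']
  rcases le_total (inner ℝ v (R⁻¹ • x)) 0 with h | h
  · exact Or.inl ⟨_, ⟨e2, h⟩, e⟩
  · exact Or.inr ⟨_, ⟨e2, by rw [inner_neg_left]; linarith⟩, e⟩

theorem radial {n : ℕ} (hn : 2 ≤ n) (R : ℝ) (hR : 0 < R) : ∃ c : ℝ, 0 < c ∧ ∀ L : ℝ, 0 ≤ L →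
    ∫⁻ x in {x : EuclideanSpace ℝ (Fin n) | R < ‖x‖ ∧ ‖x‖ ≤ R * Real.exp L},
      ENNReal.ofReal ((1 / ‖x‖) ^ (n : ℝ)) = ENNReal.ofReal (c * L) := by
  have : Nonempty (Fin n) := ⟨⟨0, by omega⟩⟩
  refine ⟨n * (volume : Measure (EuclideanSpace ℝ (Fin n))).real (ball 0 1), ?_, ?_⟩
  · have : 0 < (volume : Measure (EuclideanSpace ℝ (Fin n))).real (ball 0 1) :=
      ENNReal.toReal_pos (measure_ball_pos _ _ one_pos).ne' measure_ball_lt_top.ne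
    positivity
  intro L hL
  set b := R * Real.exp L with hb
  have hRb : R ≤ b := by
    rw [hb]; nlinarith [Real.add_one_le_exp L]
  have hS : MeasurableSet {x : EuclideanSpace ℝ (Fin n) | R < ‖x‖ ∧ ‖x‖ ≤ b} :=
    measurable_norm measurableSet_Ioc
  let f : ℝ → ℝ := (Ioc R b).indicator (fun r => (1 / r) ^ n)
  have hf0 : ∀ r, 0 ≤ f r := by
    intro r
    refine indicator_nonneg ?_ r
    intro r hr
    have : 0 < r := hR.trans hr.1
    positivity
  have hff : ∀ y ∈ Ioi (0 : ℝ), y ^ (n - 1) • f y = (Ioc R b).indicator (fun r => r⁻¹) y := by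
    intro y hy
    have hy : 0 < y := hy
    by_cases h : y ∈ Ioc R b
    · simp only [f, indicator_of_mem h]
      have : n = (n - 1) + 1 := by omega
      conv_lhs => rw [this]
      simp only [Nat.add_sub_cancel, smul_eq_mul, one_div, inv_pow, pow_succ]
      field_simp
    · simp [f, indicator_of_notMem h]
  have hcont : ContinuousOn (fun r : ℝ => r⁻¹) (Icc R b) :=
    continuousOn_inv₀.mono (fun r hr => (hR.trans_le hr.1).ne')
  have hsub : Ioi (0 : ℝ) ∩ Ioc R b = Ioc R b :=
    inter_eq_right.2 fun r hr => hR.trans hr.1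
  have hint : Integrable (fun x : EuclideanSpace ℝ (Fin n) => f ‖x‖) := by
    rw [integrable_fun_norm_addHaar]
    simp only [finrank_euclideanSpace, Fintype.card_fin]
    rw [integrableOn_congr_fun hff measurableSet_Ioi]
    refine (IntegrableOn.integrable_indicator ?_ measurableSet_Ioc).integrableOn
    exact hcont.integrableOn_Icc.mono_set Ioc_subset_Icc_self
  have hval : ∫ x : EuclideanSpace ℝ (Fin n), f ‖x‖ =
      n * (volume : Measure (EuclideanSpace ℝ (Fin n))).real (ball 0 1) * L := by
    rw [integral_fun_norm_addHaar]
    simp only [finrank_euclideanSpace, Fintype.card_fin]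
    rw [setIntegral_congr_fun measurableSet_Ioi hff, setIntegral_indicator measurableSet_Ioc, hsub,
      ← intervalIntegral.integral_of_le hRb, integral_inv_of_pos hR (hR.trans_le hRb)]
    rw [hb, mul_div_cancel_left₀ _ hR.ne', Real.log_exp]
    simp [mul_assoc]
  rw [← hval, ofReal_integral_eq_lintegral_ofReal hint (ae_of_all _ fun x => hf0 _),
    ← lintegral_indicator hS]
  congr 1
  ext x
  by_cases h : R < ‖x‖ ∧ ‖x‖ ≤ b
  · rw [indicator_of_mem (by exact h)]
    simp only [f]; rw [indicator_of_mem (by exact h), Real.rpow_natCast]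
  · rw [indicator_of_notMem (by exact h)]
    simp only [f]; rw [indicator_of_notMem (by exact h)]; simp

/-- Properties shared by `u_k` and `u_k ^ 2`. -/
structure Good (n : ℕ) (R L : ℝ) (f : EuclideanSpace ℝ (Fin n) → ℝ) : Prop where
  h1 : ∀ x, R < ‖x‖ → ‖fderiv ℝ f x‖ ≤ 4 / L * (1 / ‖x‖)
  h2 : ∀ x, R * Real.exp L < ‖x‖ → fderiv ℝ f x = 0
  h3 : ∀ x, ‖x‖ = R → |f x| ≤ 1
  h4 : ∀ x, R < ‖x‖ → ‖x‖ ≤ R * Real.exp (L / 2) → 1 / 4 ≤ |f x|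

theorem grad_le {n : ℕ} (hn : 2 ≤ n) {R c L : ℝ} (hR : 0 < R) (hc : 0 < c)
    (hcL : ∀ L : ℝ, 0 ≤ L →
    ∫⁻ x in {x : EuclideanSpace ℝ (Fin n) | R < ‖x‖ ∧ ‖x‖ ≤ R * Real.exp L},
      ENNReal.ofReal ((1 / ‖x‖) ^ (n : ℝ)) = ENNReal.ofReal (c * L)) (hL : 1 ≤ L)
    {f : EuclideanSpace ℝ (Fin n) → ℝ} (hf : Good n R L f) :
    ∫⁻ x in {x : EuclideanSpace ℝ (Fin n) | R < ‖x‖}, ENNReal.ofReal (‖fderiv ℝ f x‖ ^ (n : ℝ))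
      ≤ ENNReal.ofReal (4 ^ n * c) := by
  have hS : MeasurableSet {x : EuclideanSpace ℝ (Fin n) | R < ‖x‖} :=
    measurable_norm measurableSet_Ioi
  have hS2 : MeasurableSet {x : EuclideanSpace ℝ (Fin n) | R < ‖x‖ ∧ ‖x‖ ≤ R * Real.exp L} :=
    measurable_norm measurableSet_Ioc
  have hn0 : (n : ℝ) ≠ 0 := by positivity
  calc _ ≤ ∫⁻ x in {x : EuclideanSpace ℝ (Fin n) | R < ‖x‖ ∧ ‖x‖ ≤ R * Real.exp L},
        ENNReal.ofReal ((4 / L) ^ n) * ENNReal.ofReal ((1 / ‖x‖) ^ (n : ℝ)) := by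
        rw [← lintegral_indicator hS, ← lintegral_indicator hS2]
        refine lintegral_mono fun x => ?_
        by_cases hx : R < ‖x‖
        · rw [indicator_of_mem (by exact hx)]
          by_cases hx2 : ‖x‖ ≤ R * Real.exp L
          · rw [indicator_of_mem (by exact ⟨hx, hx2⟩), ← ENNReal.ofReal_mul (by positivity)]
            apply ENNReal.ofReal_le_ofReal
            rw [Real.rpow_natCast, Real.rpow_natCast, ← mul_pow]
            exact pow_le_pow_left₀ (norm_nonneg _) (hf.h1 x hx) n
          · rw [hf.h2 x (not_le.1 hx2)]
            simp [Real.zero_rpow hn0]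
        · rw [indicator_of_notMem (by exact hx)]; exact zero_le
    _ = ENNReal.ofReal ((4 / L) ^ n * (c * L)) := by
        rw [lintegral_const_mul' _ _ ENNReal.ofReal_ne_top, hcL L (by linarith),
          ← ENNReal.ofReal_mul (by positivity)]
    _ ≤ _ := by
        apply ENNReal.ofReal_le_ofReal
        have : L ≤ L ^ n := by
          calc L = L ^ 1 := (pow_one L).symm
            _ ≤ L ^ n := pow_le_pow_right₀ hL (by omega)
        have hLn : 0 < L ^ n := by positivity
        rw [div_pow, div_mul_eq_mul_div, div_le_iff₀ hLn]
        have : (0 : ℝ) ≤ 4 ^ n * c := by positivity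
        nlinarith

theorem den_ge {n : ℕ} (hn : 2 ≤ n) {R c L : ℝ} (hR : 0 < R)
    (hcL : ∀ L : ℝ, 0 ≤ L →
    ∫⁻ x in {x : EuclideanSpace ℝ (Fin n) | R < ‖x‖ ∧ ‖x‖ ≤ R * Real.exp L},
      ENNReal.ofReal ((1 / ‖x‖) ^ (n : ℝ)) = ENNReal.ofReal (c * L)) (hL : 1 ≤ L)
    {f : EuclideanSpace ℝ (Fin n) → ℝ} (hf : Good n R L f) :
    ENNReal.ofReal ((1 / 4) ^ n * (c / 2) * L) ≤
    ∫⁻ x in {x : EuclideanSpace ℝ (Fin n) | R < ‖x‖},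
      ENNReal.ofReal (|f x| ^ (n : ℝ) / ‖x‖ ^ (n : ℝ)) := by
  have hS : MeasurableSet {x : EuclideanSpace ℝ (Fin n) | R < ‖x‖} :=
    measurable_norm measurableSet_Ioi
  have hS2 : MeasurableSet {x : EuclideanSpace ℝ (Fin n) | R < ‖x‖ ∧ ‖x‖ ≤ R * Real.exp (L / 2)} :=
    measurable_norm measurableSet_Ioc
  calc _ = ENNReal.ofReal ((1 / 4) ^ n * (c * (L / 2))) := by congr 1; ring
    _ = ∫⁻ x in {x : EuclideanSpace ℝ (Fin n) | R < ‖x‖ ∧ ‖x‖ ≤ R * Real.exp (L / 2)},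
        ENNReal.ofReal ((1 / 4) ^ n) * ENNReal.ofReal ((1 / ‖x‖) ^ (n : ℝ)) := by
        rw [lintegral_const_mul' _ _ ENNReal.ofReal_ne_top, hcL (L / 2) (by linarith),
          ENNReal.ofReal_mul (by positivity)]
    _ ≤ _ := by
        rw [← lintegral_indicator hS, ← lintegral_indicator hS2]
        refine lintegral_mono fun x => ?_
        by_cases hx : R < ‖x‖ ∧ ‖x‖ ≤ R * Real.exp (L / 2)
        · rw [indicator_of_mem (by exact hx), indicator_of_mem (by exact hx.1),
            ← ENNReal.ofReal_mul (by positivity)]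
          apply ENNReal.ofReal_le_ofReal
          rw [Real.rpow_natCast, Real.rpow_natCast, Real.rpow_natCast, ← mul_pow, ← div_pow]
          refine pow_le_pow_left₀ (by positivity) ?_ n
          rw [mul_one_div]
          exact div_le_div_of_nonneg_right (hf.h4 x hx.1 hx.2) (norm_nonneg _)
        · rw [indicator_of_notMem (by exact hx)]; exact zero_le

theorem bdry_le {n : ℕ} {R L : ℝ}
    {f : EuclideanSpace ℝ (Fin n) → ℝ} (hf : Good n R L f) :
    ∫⁻ y in Metric.sphere (0 : EuclideanSpace ℝ (Fin n)) R,
      ENNReal.ofReal (|f y| ^ (n : ℝ)) ∂(Measure.hausdorffMeasure ((n : ℝ) - 1)) ≤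
    (Measure.hausdorffMeasure ((n : ℝ) - 1) : Measure (EuclideanSpace ℝ (Fin n)))
      (sphere 0 R) := by
  rw [← setLIntegral_one]
  refine setLIntegral_mono measurable_const fun x hx => ?_
  rw [ENNReal.ofReal_le_one, Real.rpow_natCast]
  exact pow_le_one₀ (abs_nonneg _) (hf.h3 x (by simpa using hx))

theorem log_lip {a b : ℝ} (ha : 0 < a) (hb : a / 2 ≤ b) :
    |Real.log b - Real.log a| ≤ 2 / a * |b - a| := by
  have hb0 : 0 < b := by linarith
  have key : ∀ s t : ℝ, 0 < s → 0 < t → Real.log t - Real.log s ≤ (t - s) / s := by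
    intro s t hs ht
    rw [← Real.log_div ht.ne' hs.ne']
    have := Real.log_le_sub_one_of_pos (div_pos ht hs)
    rwa [sub_div, div_self hs.ne']
  rw [abs_le]
  have h1 := key a b ha hb0
  have h2 := key b a hb0 ha
  have e1 : (b - a) / a ≤ 2 / a * |b - a| := by
    rw [div_mul_eq_mul_div]
    refine div_le_div_of_nonneg_right ?_ ha.le
    nlinarith [le_abs_self (b - a), abs_nonneg (b - a)]
  have e2 : (a - b) / b ≤ 2 / a * |b - a| := by
    calc (a - b) / b ≤ |b - a| / b :=
          div_le_div_of_nonneg_right (by rw [abs_sub_comm]; exact le_abs_self _) hb0.le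
      _ ≤ 2 / a * |b - a| := by
        rw [div_mul_eq_mul_div, div_le_div_iff₀ hb0 ha]
        nlinarith [abs_nonneg (b - a)]
  constructor <;> linarith

theorem u_lip {n : ℕ} {R : ℝ} (hR : 0 < R) {k : ℕ} (hk : 1 ≤ Real.log k)
    {x y : EuclideanSpace ℝ (Fin n)} (hx : 0 < ‖x‖) (hy : ‖x‖ / 2 ≤ ‖y‖) :
    |uTest n R k y - uTest n R k x| ≤ 2 / Real.log k * (1 / ‖x‖) * ‖y - x‖ := by
  unfold uTest
  have hy0 : 0 < ‖y‖ := by linarith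
  have hk0 : 0 < Real.log k := by linarith
  calc _ ≤ |(1 - Real.log (‖y‖ / R) / Real.log k) - (1 - Real.log (‖x‖ / R) / Real.log k)| := by
        rw [max_comm 0, max_comm 0]
        exact abs_max_sub_max_le_abs _ _ _
    _ = |Real.log ‖y‖ - Real.log ‖x‖| / Real.log k := by
        rw [Real.log_div hy0.ne' hR.ne', Real.log_div hx.ne' hR.ne', abs_sub_comm,
          ← abs_of_pos hk0, ← abs_div, abs_of_pos hk0]
        congr 1; ring
    _ ≤ (2 / ‖x‖ * |‖y‖ - ‖x‖|) / Real.log k :=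
        div_le_div_of_nonneg_right (log_lip hx hy) hk0.le
    _ ≤ (2 / ‖x‖ * ‖y - x‖) / Real.log k := by
        gcongr
        exact abs_norm_sub_norm_le _ _
    _ = _ := by ring

theorem u_nonneg {n : ℕ} {R : ℝ} {k : ℕ} (x : EuclideanSpace ℝ (Fin n)) : 0 ≤ uTest n R k x :=
  le_max_left _ _

theorem u_le_one {n : ℕ} {R : ℝ} (hR : 0 < R) {k : ℕ} (hk : 1 ≤ Real.log k)
    {x : EuclideanSpace ℝ (Fin n)} (hx : R ≤ ‖x‖) : uTest n R k x ≤ 1 := by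
  refine max_le zero_le_one ?_
  have : 0 ≤ Real.log (‖x‖ / R) := Real.log_nonneg (by rwa [le_div_iff₀ hR, one_mul])
  have : 0 ≤ Real.log (‖x‖ / R) / Real.log k := div_nonneg this (by linarith)
  linarith

theorem u_zero {n : ℕ} {R : ℝ} (hR : 0 < R) {k : ℕ} (hk : 1 ≤ Real.log k)
    {x : EuclideanSpace ℝ (Fin n)} (hx : R * Real.exp (Real.log k) < ‖x‖) : uTest n R k x = 0 := by
  refine max_eq_left ?_
  have h0 : 0 < Real.log k := by linarith
  have : Real.log k ≤ Real.log (‖x‖ / R) := by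
    rw [Real.le_log_iff_exp_le, le_div_iff₀ hR]
    · linarith
    · have : 0 < R * Real.exp (Real.log k) := by positivity
      exact div_pos (by linarith) hR
  have : 1 ≤ Real.log (‖x‖ / R) / Real.log k := by rwa [le_div_iff₀ h0, one_mul]
  linarith

theorem u_half {n : ℕ} {R : ℝ} (hR : 0 < R) {k : ℕ} (hk : 1 ≤ Real.log k)
    {x : EuclideanSpace ℝ (Fin n)} (hx : R < ‖x‖) (hx2 : ‖x‖ ≤ R * Real.exp (Real.log k / 2)) :
    1 / 2 ≤ uTest n R k x := by
  refine le_trans ?_ (le_max_right _ _)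
  have h0 : 0 < Real.log k := by linarith
  have : Real.log (‖x‖ / R) ≤ Real.log k / 2 := by
    rw [Real.log_le_iff_le_exp (div_pos (by linarith) hR), div_le_iff₀ hR]
    linarith
  have : Real.log (‖x‖ / R) / Real.log k ≤ 1 / 2 := by rw [div_le_iff₀ h0]; linarith
  linarith

theorem fd_zero {n : ℕ} {f : EuclideanSpace ℝ (Fin n) → ℝ} {b : ℝ}
    (h : ∀ x, b < ‖x‖ → f x = 0) {x : EuclideanSpace ℝ (Fin n)} (hx : b < ‖x‖) :
    fderiv ℝ f x = 0 := by
  have : f =ᶠ[𝓝 x] fun _ => 0 := by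
    filter_upwards [(isOpen_lt continuous_const continuous_norm).mem_nhds hx] with y hy
    exact h y hy
  rw [this.fderiv_eq]; simp

theorem good_u {n : ℕ} {R : ℝ} (hR : 0 < R) {k : ℕ} (hk : 1 ≤ Real.log k) :
    Good n R (Real.log k) (uTest n R k) where
  h1 x hx := by
    have hx0 : 0 < ‖x‖ := hR.trans hx
    refine norm_fderiv_le_of_lip' ℝ (by positivity) ?_
    filter_upwards [(isOpen_lt continuous_const continuous_norm).mem_nhds
      (show ‖x‖ / 2 < ‖x‖ by linarith)] with y hy
    refine (u_lip hR hk hx0 (le_of_lt hy)).trans ?_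
    gcongr
    norm_num
  h2 x hx := fd_zero (fun y hy => u_zero hR hk hy) hx
  h3 x hx := by
    rw [abs_of_nonneg (u_nonneg x)]; exact u_le_one hR hk hx.ge
  h4 x hx hx2 := by
    rw [abs_of_nonneg (u_nonneg x)]
    linarith [u_half hR hk hx hx2]

theorem good_u2 {n : ℕ} {R : ℝ} (hR : 0 < R) {k : ℕ} (hk : 1 ≤ Real.log k) :
    Good n R (Real.log k) (fun x => uTest n R k x ^ 2) where
  h1 x hx := by
    have hx0 : 0 < ‖x‖ := hR.trans hx
    refine norm_fderiv_le_of_lip' ℝ (by positivity) ?_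
    filter_upwards [(isOpen_lt continuous_const continuous_norm).mem_nhds
      (show ‖x‖ / 2 < ‖x‖ by linarith), (isOpen_lt continuous_const continuous_norm).mem_nhds hx]
      with y hy hy2
    have h := u_lip hR hk hx0 (le_of_lt hy)
    rw [Real.norm_eq_abs, sq_sub_sq, abs_mul]
    have h' : |uTest n R k y + uTest n R k x| ≤ 2 := by
      rw [abs_of_nonneg (add_nonneg (u_nonneg _) (u_nonneg _))]
      linarith [u_le_one hR hk hx.le, u_le_one hR hk (le_of_lt hy2)]
    calc _ ≤ 2 * (2 / Real.log k * (1 / ‖x‖) * ‖y - x‖) := by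
          gcongr
      _ = _ := by ring
  h2 x hx := fd_zero (fun y hy => by simp [u_zero hR hk hy]) hx
  h3 x hx := by
    rw [abs_of_nonneg (sq_nonneg _)]
    exact pow_le_one₀ (u_nonneg x) (u_le_one hR hk hx.ge)
  h4 x hx hx2 := by
    rw [abs_of_nonneg (sq_nonneg _)]
    nlinarith [u_half hR hk hx hx2]

theorem hasDeriv_sq (t : ℝ) : DifferentiableAt ℝ (fun t : ℝ => (max 0 t) ^ 2) t := by
  rcases lt_trichotomy t 0 with h | h | h
  · have : (fun t : ℝ => (max 0 t) ^ 2) =ᶠ[𝓝 t] fun _ => 0 := by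
      filter_upwards [gt_mem_nhds h] with s hs
      simp [max_eq_left hs.le]
    exact (differentiableAt_const _).congr_of_eventuallyEq this
  · subst h
    refine HasFDerivAt.differentiableAt (f' := 0) ?_
    rw [hasFDerivAt_iff_isLittleO_nhds_zero]
    have h2 : (fun h : ℝ => h ^ 2) =o[𝓝 0] fun h => h := by
      simpa using Asymptotics.isLittleO_pow_id (𝕜 := ℝ) (n := 2) (by norm_num)
    refine Asymptotics.IsBigO.trans_isLittleO ?_ h2
    refine Asymptotics.IsBigO.of_bound 1 (Eventually.of_forall fun s => ?_)
    simp only [zero_add, max_self, zero_apply, Real.norm_eq_abs, one_mul]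
    rw [abs_of_nonneg (sq_nonneg s)]
    rcases le_total s 0 with hs | hs
    · simp [max_eq_left hs]; positivity
    · simp [max_eq_right hs]
  · have : (fun t : ℝ => (max 0 t) ^ 2) =ᶠ[𝓝 t] fun s => s ^ 2 := by
      filter_upwards [lt_mem_nhds h] with s hs
      simp [max_eq_right hs.le]
    exact (by fun_prop : DifferentiableAt ℝ (fun s : ℝ => s ^ 2) t).congr_of_eventuallyEq this

theorem mem_u2 {n : ℕ} (hn : 2 ≤ n) {R c : ℝ} (hR : 0 < R) (hc : 0 < c)
    (hcL : ∀ L : ℝ, 0 ≤ L →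
    ∫⁻ x in {x : EuclideanSpace ℝ (Fin n) | R < ‖x‖ ∧ ‖x‖ ≤ R * Real.exp L},
      ENNReal.ofReal ((1 / ‖x‖) ^ (n : ℝ)) = ENNReal.ofReal (c * L))
    {k : ℕ} (hk : 1 ≤ Real.log k) :
    MemW1p (n : ℝ) {x : EuclideanSpace ℝ (Fin n) | R < ‖x‖} (fun x => uTest n R k x ^ 2) := by
  have hn0 : (n : ℝ) ≠ 0 := by positivity
  refine ⟨?_, ?_, ?_, ?_⟩
  · have hcl : closure {x : EuclideanSpace ℝ (Fin n) | R < ‖x‖} ⊆ {x | R ≤ ‖x‖} :=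
      closure_minimal (fun x (hx : R < ‖x‖) => show R ≤ ‖x‖ from hx.le) (isClosed_le continuous_const continuous_norm)
    refine ContinuousOn.mono ?_ hcl
    unfold uTest
    refine ContinuousOn.pow (continuousOn_const.sup (continuousOn_const.sub
      (ContinuousOn.div_const (ContinuousOn.log ?_ ?_) _))) 2
    · fun_prop
    · intro x hx
      have : 0 < ‖x‖ := hR.trans_le hx
      positivity
  · intro x hx
    have hx0 : 0 < ‖x‖ := hR.trans hx
    have hd : DifferentiableAt ℝ
        (fun x : EuclideanSpace ℝ (Fin n) => 1 - Real.log (‖x‖ / R) / Real.log k) x := by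
      have h1 : DifferentiableAt ℝ (fun x : EuclideanSpace ℝ (Fin n) => ‖x‖) x :=
        (contDiffAt_norm ℝ (norm_pos_iff.1 hx0)).differentiableAt one_ne_zero
      have h2 : DifferentiableAt ℝ (fun x : EuclideanSpace ℝ (Fin n) => ‖x‖ / R) x := by
        simpa only [div_eq_mul_inv] using h1.mul_const R⁻¹
      have h3 : DifferentiableAt ℝ (fun x : EuclideanSpace ℝ (Fin n) => Real.log (‖x‖ / R)) x :=
        h2.log (by positivity)
      have h4 := (h3.mul_const (Real.log k)⁻¹).const_sub 1
      simpa only [div_eq_mul_inv] using h4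
    exact (hasDeriv_sq _).comp x hd
  · have hS : MeasurableSet {x : EuclideanSpace ℝ (Fin n) | R < ‖x‖} :=
      measurable_norm measurableSet_Ioi
    refine ne_of_lt (lt_of_le_of_lt (b := (volume : Measure (EuclideanSpace ℝ (Fin n)))
      (closedBall 0 (R * Real.exp (Real.log k)))) ?_ measure_closedBall_lt_top)
    rw [← lintegral_indicator_one measurableSet_closedBall, ← lintegral_indicator hS]
    refine lintegral_mono fun x => ?_
    by_cases hx : R < ‖x‖
    · rw [indicator_of_mem (by exact hx)]
      by_cases hx2 : ‖x‖ ≤ R * Real.exp (Real.log k)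
      · rw [indicator_of_mem (by simpa using hx2), Pi.one_apply, ENNReal.ofReal_le_one,
          Real.rpow_natCast, abs_of_nonneg (sq_nonneg _)]
        exact pow_le_one₀ (sq_nonneg _) (pow_le_one₀ (u_nonneg x) (u_le_one hR hk hx.le))
      · simp [u_zero hR hk (not_le.1 hx2), Real.zero_rpow hn0]
    · rw [indicator_of_notMem (by exact hx)]; exact zero_le
  · exact ne_of_lt ((grad_le hn hR hc hcL hk (good_u2 hR hk)).trans_lt ENNReal.ofReal_lt_top)

/-- **Remark 6.3 (ii): failure of the Robin–Hardy inequality for `p = n`.**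
For `p = n ≥ 2`, `R > 0`, `σ > 0`, no constant `C > 0` makes the inequality
`∫_{B_R^c} |∇u|^n + σ∫_{∂B_R} |u|^n dν ≥ C ∫_{B_R^c} |u|^n/|x|^n` hold for all
`u ∈ W^{1,n}(B_R^c)`; indeed for the test functions
`u_k(x) = max{0, 1 - log(|x|/R)/log k}` the corresponding quotient tends to `0`. -/
theorem exterior_hardy_fails_p_eq_n (n : ℕ) (hn : 2 ≤ n) (R σ : ℝ)
    (hR : 0 < R) (hσ : 0 < σ) :
    (¬ ∃ C : ℝ, 0 < C ∧ ∀ u : EuclideanSpace ℝ (Fin n) → ℝ,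
        MemW1p (n : ℝ) {x : EuclideanSpace ℝ (Fin n) | R < ‖x‖} u →
        (∫⁻ x in {x : EuclideanSpace ℝ (Fin n) | R < ‖x‖},
            ENNReal.ofReal (‖fderiv ℝ u x‖ ^ (n : ℝ))) +
          ENNReal.ofReal σ *
            (∫⁻ y in Metric.sphere (0 : EuclideanSpace ℝ (Fin n)) R,
              ENNReal.ofReal (|u y| ^ (n : ℝ)) ∂(Measure.hausdorffMeasure ((n : ℝ) - 1))) ≥
          ENNReal.ofReal C *
            ∫⁻ x in {x : EuclideanSpace ℝ (Fin n) | R < ‖x‖},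
              ENNReal.ofReal (|u x| ^ (n : ℝ) / ‖x‖ ^ (n : ℝ))) ∧
      Tendsto (fun k : ℕ =>
        ((∫⁻ x in {x : EuclideanSpace ℝ (Fin n) | R < ‖x‖},
            ENNReal.ofReal (‖fderiv ℝ (uTest n R k) x‖ ^ (n : ℝ))) +
          ENNReal.ofReal σ *
            ∫⁻ y in Metric.sphere (0 : EuclideanSpace ℝ (Fin n)) R,
              ENNReal.ofReal (|uTest n R k y| ^ (n : ℝ))
                ∂(Measure.hausdorffMeasure ((n : ℝ) - 1))) /
          ∫⁻ x in {x : EuclideanSpace ℝ (Fin n) | R < ‖x‖},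
            ENNReal.ofReal (|uTest n R k x| ^ (n : ℝ) / ‖x‖ ^ (n : ℝ)))
        atTop (𝓝 (0 : ℝ≥0∞)) := by
  obtain ⟨c, hc, hcL⟩ := radial hn R hR
  set A : ℝ≥0∞ := ENNReal.ofReal (4 ^ n * c) + ENNReal.ofReal σ *
    (Measure.hausdorffMeasure ((n : ℝ) - 1) : Measure (EuclideanSpace ℝ (Fin n))) (sphere 0 R)
    with hA
  have hAtop : A ≠ ∞ := ENNReal.add_ne_top.2 ⟨ENNReal.ofReal_ne_top,
    ENNReal.mul_ne_top ENNReal.ofReal_ne_top (sphere_finite hn R hR).ne⟩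
  set B : ℝ := (1 / 4) ^ n * (c / 2) with hB
  have hB0 : 0 < B := by positivity
  have hlog : Tendsto (fun k : ℕ => Real.log k) atTop atTop :=
    Real.tendsto_log_atTop.comp tendsto_natCast_atTop_atTop
  have hev : ∀ᶠ k : ℕ in atTop, 1 ≤ Real.log k := hlog.eventually_ge_atTop 1
  have hnum : ∀ (L : ℝ) (f : EuclideanSpace ℝ (Fin n) → ℝ), 1 ≤ L → Good n R L f →
      (∫⁻ x in {x : EuclideanSpace ℝ (Fin n) | R < ‖x‖},
            ENNReal.ofReal (‖fderiv ℝ f x‖ ^ (n : ℝ))) +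
          ENNReal.ofReal σ *
            (∫⁻ y in Metric.sphere (0 : EuclideanSpace ℝ (Fin n)) R,
              ENNReal.ofReal (|f y| ^ (n : ℝ)) ∂(Measure.hausdorffMeasure ((n : ℝ) - 1))) ≤ A := by
    intro L f hL hf
    exact add_le_add (grad_le hn hR hc hcL hL hf) (mul_le_mul_right (bdry_le hf) _)
  have hBtend : ∀ D : ℝ, 0 < D →
      Tendsto (fun k : ℕ => ENNReal.ofReal (D * Real.log k)) atTop (𝓝 ∞) := fun D hD =>
    ENNReal.tendsto_ofReal_atTop.comp (hlog.const_mul_atTop hD)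
  constructor
  · rintro ⟨C, hC, H⟩
    have h1 := (hBtend (C * B) (by positivity)).eventually (lt_mem_nhds hAtop.lt_top)
    obtain ⟨k, hk, hk1⟩ := (hev.and h1).exists
    have h2 := H _ (mem_u2 hn hR hc hcL hk)
    have h3 := hnum _ _ hk (good_u2 (n := n) hR hk)
    have h4 := den_ge hn hR hcL hk (good_u2 (n := n) hR hk)
    have h5 := (mul_le_mul_right h4 (ENNReal.ofReal C)).trans (le_trans h2 h3)
    rw [← ENNReal.ofReal_mul hC.le, ← mul_assoc, ← hB] at h5
    exact absurd h5 (not_le.2 hk1)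
  · have hlim : Tendsto (fun k : ℕ => A / ENNReal.ofReal (B * Real.log k)) atTop (𝓝 0) := by
      have := ENNReal.Tendsto.const_div (hBtend B hB0) (Or.inr hAtop)
      simpa using this
    refine tendsto_of_tendsto_of_tendsto_of_le_of_le' tendsto_const_nhds hlim
      (Eventually.of_forall fun _ => zero_le) ?_
    filter_upwards [hev] with k hk
    exact ENNReal.div_le_div (hnum _ _ hk (good_u hR hk)) (den_ge hn hR hcL hk (good_u hR hk))

end RobinHardy
end
end
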